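/- Let f be a homeomorphism of the open annulus 𝔸 = 𝕋¹ × ℝ which is isotopic to the identity and preserves a Borel probability measure of full support, and let f̌ be a lift of f to ℝ². Then for all integers r and s with s ≥ 1 and gcd(|r|, s) = 1 such that the rational number r/s belongs to the interior of rot(f̌) in [-∞,+∞], there exists a point ž ∈ ℝ² with f̌^s(ž) = ž + (r,0). -/

import Mathlib

open MeasureTheory Filter Topology Set

noncomputable section

/-- The circle `𝕋¹ = ℝ/ℤ`. -/
abbrev T1 : Type := AddCircle (1 : ℝ)

/-- The open annulus `𝔸 = 𝕋¹ × ℝ`. -/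
abbrev Ann : Type := T1 × ℝ

/-- The universal covering map `π : ℝ² → 𝔸`, `π(x,y) = (x + ℤ, y)`. -/
def pA : ℝ × ℝ → Ann := fun z => ((z.1 : T1), z.2)

/-- An open topological disk of `𝔸`: a nonempty open connected simply connected subset. -/
def IsOpenTopDisk (U : Set Ann) : Prop :=
  IsOpen U ∧ IsConnected U ∧ SimplyConnectedSpace U

/-- `f` is isotopic to the identity. -/
def IsotopicToId (f : Ann ≃ₜ Ann) : Prop :=
  ∃ H : ℝ × Ann → Ann, ContinuousOn H (Set.Icc (0:ℝ) 1 ×ˢ Set.univ) ∧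
    (∀ z, H (0, z) = z) ∧ (∀ z, H (1, z) = f z) ∧
    ∀ t ∈ Set.Icc (0:ℝ) 1, ∃ g : Ann ≃ₜ Ann, ∀ z, H (t, z) = g z

/-- `μ` is an `f`-invariant Borel probability measure of full support. -/
def InvariantFullMeasure (f : Ann ≃ₜ Ann) (μ : Measure Ann) : Prop :=
  IsProbabilityMeasure μ ∧ Measure.map f μ = μ ∧
    ∀ U : Set Ann, IsOpen U → U.Nonempty → 0 < μ U

/-- `fc` is a lift of `f` to the universal covering `ℝ²`. -/
def IsLift (f : Ann ≃ₜ Ann) (fc : (ℝ × ℝ) ≃ₜ (ℝ × ℝ)) : Prop :=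
  ∀ z, pA (fc z) = f (pA z)

/-- The rotation set of `fc` relative to a compact set `K`. -/
def rotK (fc : (ℝ × ℝ) ≃ₜ (ℝ × ℝ)) (K : Set Ann) : Set EReal :=
  {ρ | ∃ (z : ℕ → ℝ × ℝ) (n : ℕ → ℕ), Tendsto n atTop atTop ∧
    (∀ k, pA (z k) ∈ K ∧ pA ((⇑fc)^[n k] (z k)) ∈ K) ∧
    Tendsto (fun k => (((((⇑fc)^[n k] (z k)).1 - (z k).1) / (n k) : ℝ) : EReal))
      atTop (nhds ρ)}

/-- The rotation set of `fc`. -/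
def rot (fc : (ℝ × ℝ) ≃ₜ (ℝ × ℝ)) : Set EReal :=
  closure (⋃ (K : Set Ann) (_ : IsCompact K), rotK fc K)

/-- Alternative `(1)` in Theorems A and B: existence of non-contractible
periodic points of arbitrarily large prime period. -/
def NonContractibleAlt (fc : (ℝ × ℝ) ≃ₜ (ℝ × ℝ)) : Prop :=
  ∃ q : ℕ, 1 ≤ q ∧ ∀ r s : ℕ, 0 < r → 0 < s → Nat.Coprime r s → (r : ℝ) / s ≤ 1 / q →
    (∃ z : ℝ × ℝ, (⇑fc)^[s] z + ((r : ℝ), 0) = z) ∨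
    (∃ z : ℝ × ℝ, (⇑fc)^[s] z - ((r : ℝ), 0) = z)

/-!
If `r / s` is not realized, then `g = fc ^ s - (r, 0)` is a fixed point free homeomorphism of the
plane, isotopic to the identity and commuting with the deck translations. By Brouwer's theorem such
a map has no periodic points, and therefore, by Franks' lemma, no closed pseudo-orbits with small
jumps: a shortest one could be turned into a periodic orbit by a perturbation supported in disjoint
free neighbourhoods of the jump segments, which creates no fixed point. Brouwer's theorem itself
follows by induction on the period: a point of period `n ≥ 3` is joined to its image by an arc, and
shortcutting the orbit along the arc up to its first return lowers the period, while period two is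
excluded by a winding number argument.

On the other hand `r / s` lies strictly between two elements of the rotation set, so `g` has orbit
segments with endpoints in a common horizontal strip whose horizontal drifts are arbitrarily large
in both directions. Since the annulus map is nonwandering, any two points of the strip are joined,
up to a deck translation, by a pseudo-orbit with small jumps, and the translations needed are
bounded by compactness. Hence there are pseudo-orbits from `0` to `(p, 0)` and to `(q, 0)` with
`q < 0 < p`, and concatenating translates of them closes up a pseudo-orbit, a contradiction.
-/

/-! ### Isotopies and Brouwer homeomorphisms -/

section Isotopy

variable {X : Type*} [TopologicalSpace X] {f g : X ≃ₜ X}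

/-- `f` is the time-one map of a continuous family of injective maps starting at the identity.
The time runs over all of `ℝ`, so that continuity can be stated without restriction to `[0, 1]`;
the intermediate maps need not be surjective. -/
def IsotopicThroughInjections (f : X ≃ₜ X) : Prop :=
  ∃ G : ℝ × X → X, Continuous G ∧ (∀ t, Function.Injective fun z => G (t, z)) ∧
    (∀ z, G (0, z) = z) ∧ ∀ z, G (1, z) = f z

namespace IsotopicThroughInjections

theorem refl : IsotopicThroughInjections (Homeomorph.refl X) :=
  ⟨Prod.snd, continuous_snd, fun _ _ _ h => h, fun _ => rfl, fun _ => rfl⟩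

theorem trans (hf : IsotopicThroughInjections f) (hg : IsotopicThroughInjections g) :
    IsotopicThroughInjections (f.trans g) := by
  obtain ⟨F, hF, F_inj, F_zero, F_one⟩ := hf
  obtain ⟨G, hG, G_inj, G_zero, G_one⟩ := hg
  exact ⟨fun p => G (p.1, F p), by fun_prop, fun t => (G_inj t).comp (F_inj t),
    fun z => by simp only [F_zero, G_zero], fun z => by simp only [F_one, G_one,
      Homeomorph.trans_apply]⟩

theorem symm (hf : IsotopicThroughInjections f) : IsotopicThroughInjections f.symm := by
  obtain ⟨F, hF, F_inj, F_zero, F_one⟩ := hf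
  exact ⟨fun p => f.symm (F (1 - p.1, p.2)), by fun_prop,
    fun t => f.symm.injective.comp (F_inj (1 - t)), fun z => by simp [F_one],
    fun z => by simp [F_zero]⟩

theorem exists_iterate (hf : IsotopicThroughInjections f) (n : ℕ) :
    ∃ g : X ≃ₜ X, IsotopicThroughInjections g ∧ ⇑g = f^[n] := by
  induction n with
  | zero => exact ⟨Homeomorph.refl X, refl, rfl⟩
  | succ n ih =>
    obtain ⟨g, hg, hgf⟩ := ih
    exact ⟨f.trans g, hf.trans hg, by rw [Function.iterate_succ, ← hgf]; rfl⟩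

theorem addRight {E : Type*} [AddGroup E] [TopologicalSpace E] [IsTopologicalAddGroup E]
    [MulActionWithZero ℝ E] [ContinuousSMul ℝ E] (v : E) :
    IsotopicThroughInjections (Homeomorph.addRight v) :=
  ⟨fun p => p.2 + p.1 • v, by fun_prop, fun t => add_left_injective (t • v), fun z => by simp,
    fun z => by simp⟩

end IsotopicThroughInjections

/-- A fixed point free homeomorphism isotopic to the identity; in the plane these are the Brouwer
homeomorphisms. -/
structure IsBrouwerHomeo (f : X ≃ₜ X) : Prop where
  isotopic : IsotopicThroughInjections f
  apply_ne_self : ∀ x, f x ≠ x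

theorem IsBrouwerHomeo.symm (hf : IsBrouwerHomeo f) : IsBrouwerHomeo f.symm :=
  ⟨hf.isotopic.symm, fun x h => hf.apply_ne_self x (f.symm_apply_eq.1 h).symm⟩

end Isotopy

section PeriodTwo

variable {X : Type*} [TopologicalSpace X]

theorem exists_continuous_exp_eq [SimplyConnectedSpace X] [LocallyPathConnectedSpace X] {k : X → ℂ}
    (hk : Continuous k) (hk0 : ∀ x, k x ≠ 0) :
    ∃ κ : X → ℂ, Continuous κ ∧ ∀ x, Complex.exp (κ x) = k x := by
  let K : C(X, {z : ℂ // z ≠ 0}) := ⟨fun x => ⟨k x, hk0 x⟩, by fun_prop⟩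
  obtain ⟨x₀⟩ : Nonempty X := inferInstance
  obtain ⟨κ, ⟨-, hκ⟩, -⟩ := Complex.isCoveringMap_exp.existsUnique_continuousMap_lifts K x₀
    (Complex.log (k x₀)) (Subtype.ext (Complex.exp_log (hk0 x₀)))
  exact ⟨κ, κ.continuous, fun x => congrArg Subtype.val (congrFun hκ x)⟩

theorem sub_eq_sub_of_exp_eq_mul_exp [PreconnectedSpace X] {c d : X → ℂ} (hc : Continuous c)
    (hd : Continuous d) {m : ℂ} (h : ∀ x, Complex.exp (c x) = m * Complex.exp (d x)) (x y : X) :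
    c x - d x = c y - d y := by
  have exp_sub_const : ∀ z, Complex.exp (c z - d z) = m := fun z => by
    rw [Complex.exp_sub, h, mul_div_cancel_right₀ _ (Complex.exp_ne_zero _)]
  refine congrFun (Complex.isCoveringMap_exp.eq_of_comp_eq (g₁ := fun z => c z - d z)
    (g₂ := fun _ => c y - d y) (by fun_prop) (by fun_prop) ?_ y rfl) x
  exact funext fun z => Subtype.ext ((exp_sub_const z).trans (exp_sub_const y).symm)

/-- Let `κ (t, z)` be a continuous logarithm of `G (t, f z) - G (t, z)`. Along an orbit of period
two, `κ (t, f a) - κ (t, a)` is independent of `t`, and comparing the times `0` and `1` forces it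
to vanish. -/
theorem IsBrouwerHomeo.apply_apply_ne_self {f : ℝ × ℝ ≃ₜ ℝ × ℝ} (hf : IsBrouwerHomeo f)
    (a : ℝ × ℝ) : f (f a) ≠ a := by
  intro ha
  obtain ⟨G, hG, G_inj, G_zero, G_one⟩ := hf.isotopic
  let e := Complex.equivRealProdCLM.symm
  obtain ⟨κ, hκ, exp_κ⟩ := exists_continuous_exp_eq
    (k := fun p : ℝ × (ℝ × ℝ) => e (G (p.1, f p.2) - G p)) (by fun_prop) fun p hp =>
      hf.apply_ne_self p.2 (G_inj p.1 (sub_eq_zero.1 ((map_eq_zero_iff e e.injective).1 hp)))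
  have space_increment : κ (1, a) - κ (0, f a) = κ (1, f a) - κ (0, f (f a)) :=
    sub_eq_sub_of_exp_eq_mul_exp (c := fun z => κ (1, z)) (d := fun z => κ (0, f z)) (m := 1)
      (by fun_prop) (by fun_prop) (fun z => by simp only [exp_κ, G_zero, G_one, one_mul]) a (f a)
  have time_increment : κ (0, f a) - κ (0, a) = κ (1, f a) - κ (1, a) :=
    sub_eq_sub_of_exp_eq_mul_exp (c := fun t => κ (t, f a)) (d := fun t => κ (t, a)) (m := -1)
      (by fun_prop) (by fun_prop) (fun t => by simp only [exp_κ, ha, neg_one_mul, ← map_neg,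
        neg_sub]) 0 1
  have logs_agree : κ (0, f a) = κ (0, a) := by
    rw [ha] at space_increment
    linear_combination (1 / 2) * time_increment - (1 / 2) * space_increment
  have neg_sub_eq_self : -(f a - a) = f a - a := by
    have := exp_κ (0, f a)
    rw [logs_agree, exp_κ] at this
    simpa [G_zero, ha] using (e.injective this).symm
  exact hf.apply_ne_self a (sub_eq_zero.1 (neg_eq_self.1 neg_sub_eq_self))

end PeriodTwo

/-! ### Pushing points around by isotopies with prescribed support -/

section Push

variable {E : Type*} [NormedAddCommGroup E] [NormedSpace ℝ E]

theorem lipschitzWith_tent_smul (c v : E) {ρ : ℝ} (hρ : 0 < ρ) :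
    LipschitzWith (‖v‖ / ρ).toNNReal fun x => max 0 (1 - dist x c / ρ) • v := by
  refine LipschitzWith.of_dist_le' fun x y => ?_
  have tent_sub : |max 0 (1 - dist x c / ρ) - max 0 (1 - dist y c / ρ)| ≤ dist x y / ρ :=
    calc |max 0 (1 - dist x c / ρ) - max 0 (1 - dist y c / ρ)|
        ≤ |(1 - dist x c / ρ) - (1 - dist y c / ρ)| := by
          rw [max_comm 0, max_comm 0]
          exact abs_max_sub_max_le_abs _ _ _
      _ = |dist x c - dist y c| / ρ := by
          rw [← abs_neg, ← abs_of_pos hρ, ← abs_div, abs_of_pos hρ]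
          ring_nf
      _ ≤ dist x y / ρ := by
          gcongr
          exact abs_dist_sub_le x y c
  calc dist (max 0 (1 - dist x c / ρ) • v) (max 0 (1 - dist y c / ρ) • v)
      = |max 0 (1 - dist x c / ρ) - max 0 (1 - dist y c / ρ)| * ‖v‖ := by
        rw [dist_eq_norm, ← sub_smul, norm_smul, Real.norm_eq_abs]
    _ ≤ dist x y / ρ * ‖v‖ := by gcongr
    _ = ‖v‖ / ρ * dist x y := by ring

variable [CompleteSpace E]

theorem exists_isotopic_eq_add_of_lipschitzWith {K : NNReal} {φ : E → E} (hφ : LipschitzWith K φ)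
    (hK : K < 1) : ∃ h : E ≃ₜ E, IsotopicThroughInjections h ∧ ∀ x, h x = x + φ x := by
  have clamped (t : ℝ) : LipschitzWith K fun x => (projIcc 0 1 zero_le_one t : ℝ) • φ x := by
    refine (((lipschitzWith_smul (projIcc (0 : ℝ) 1 zero_le_one t : ℝ)).comp hφ).weaken ?_)
    refine mul_le_of_le_one_left zero_le ?_
    rw [← NNReal.coe_le_coe, coe_nnnorm, Real.norm_of_nonneg (projIcc 0 1 zero_le_one t).2.1]
    exact (projIcc 0 1 zero_le_one t).2.2
  have approx : ApproximatesLinearOn (fun x => x + φ x)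
      (ContinuousLinearEquiv.refl ℝ E : E →L[ℝ] E) univ K := by
    refine LipschitzOnWith.approximatesLinearOn ?_
    convert hφ.lipschitzOnWith using 1
    ext x
    simp
  have small : Subsingleton E ∨ K < ‖((ContinuousLinearEquiv.refl ℝ E).symm : E →L[ℝ] E)‖₊⁻¹ := by
    refine (subsingleton_or_nontrivial E).imp_right fun _ => ?_
    have : NontrivialTopology E := EMetric.nontrivial_iff_nontrivialTopology.1 ‹_›
    rw [ContinuousLinearEquiv.refl_symm, ContinuousLinearEquiv.coe_refl,
      ContinuousLinearMap.nnnorm_id, inv_one]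
    exact hK
  refine ⟨approx.toHomeomorph _ small, ⟨fun p => p.2 + (projIcc 0 1 zero_le_one p.1 : ℝ) • φ p.2,
    ?_, fun t => ?_, fun z => by simp, fun z => ?_⟩, fun x => rfl⟩
  · have := hφ.continuous
    have := continuous_projIcc (h := zero_le_one (α := ℝ))
    fun_prop
  · exact (AntilipschitzWith.id.add_lipschitzWith (clamped t) (by simpa using hK)).injective
  · simp only [projIcc_right, one_smul]
    rfl

theorem exists_isotopic_push_ball {c q : E} {ρ : ℝ} (hq : q ∈ Metric.ball c ρ) :
    ∃ h : E ≃ₜ E, IsotopicThroughInjections h ∧ h c = q ∧ ∀ x ∉ Metric.ball c ρ, h x = x := by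
  have hρ : 0 < ρ := Metric.pos_of_mem_ball hq
  have hlt : (‖q - c‖ / ρ).toNNReal < 1 := by
    rwa [Real.toNNReal_lt_one, div_lt_one hρ, ← dist_eq_norm]
  obtain ⟨h, h_iso, h_apply⟩ :=
    exists_isotopic_eq_add_of_lipschitzWith (lipschitzWith_tent_smul c (q - c) hρ) hlt
  refine ⟨h, h_iso, by simp [h_apply], fun x hx => ?_⟩
  have : 1 - dist x c / ρ ≤ 0 := by
    rw [sub_nonpos, one_le_div hρ]
    exact not_lt.1 hx
  rw [h_apply, max_eq_left this, zero_smul, add_zero]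

theorem exists_isotopic_push {U : Set E} (hU : IsOpen U) (hUc : IsPreconnected U) {p q : E}
    (hp : p ∈ U) (hq : q ∈ U) :
    ∃ h : E ≃ₜ E, IsotopicThroughInjections h ∧ h p = q ∧ ∀ x ∉ U, h x = x := by
  refine hUc.induction₂
    (fun p q => ∃ h : E ≃ₜ E, IsotopicThroughInjections h ∧ h p = q ∧ ∀ x ∉ U, h x = x)
    ?_ ?_ ?_ hp hq
  · intro x hx
    obtain ⟨ρ, hρ, hball⟩ := Metric.isOpen_iff.1 hU x hx
    filter_upwards [mem_nhdsWithin_of_mem_nhds (Metric.ball_mem_nhds x hρ)] with y hy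
    obtain ⟨h, h_iso, hxy, h_off⟩ := exists_isotopic_push_ball hy
    exact ⟨h, h_iso, hxy, fun z hz => h_off z fun hz' => hz (hball hz')⟩
  · rintro x y z _ _ _ ⟨h, h_iso, hxy, h_off⟩ ⟨k, k_iso, kyz, k_off⟩
    exact ⟨h.trans k, h_iso.trans k_iso, by simp [hxy, kyz],
      fun w hw => by simp [h_off w hw, k_off w hw]⟩
  · rintro x y _ _ ⟨h, h_iso, hxy, h_off⟩
    exact ⟨h.symm, h_iso.symm, by simp [← hxy],
      fun w hw => by rw [Homeomorph.symm_apply_eq, h_off w hw]⟩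

theorem exists_isotopic_push_finset {ι : Type*} {U : ι → Set E} (hU : ∀ i, IsOpen (U i))
    (hUc : ∀ i, IsPreconnected (U i)) (hdisj : Pairwise (Function.onFun Disjoint U)) {p q : ι → E}
    (hp : ∀ i, p i ∈ U i) (hq : ∀ i, q i ∈ U i) (s : Finset ι) :
    ∃ h : E ≃ₜ E, IsotopicThroughInjections h ∧ (∀ i ∈ s, h (p i) = q i) ∧
      (∀ i, MapsTo h (U i) (U i)) ∧ ∀ x, (∀ i ∈ s, x ∉ U i) → h x = x := by
  classical
  induction s using Finset.induction_on with
  | empty => exact ⟨Homeomorph.refl E, .refl, by simp, fun _ _ hx => hx, fun _ _ => rfl⟩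
  | insert j s hj ih =>
    obtain ⟨h, h_iso, h_push, h_maps, h_off⟩ := ih
    obtain ⟨k, k_iso, k_push, k_off⟩ := exists_isotopic_push (hU j) (hUc j) (hp j) (hq j)
    have k_maps (i : ι) : MapsTo k (U i) (U i) := fun x hx => by
      by_cases hxj : x ∈ U j
      · obtain rfl : i = j := hdisj.eq (not_disjoint_iff.2 ⟨x, hx, hxj⟩)
        by_contra hkx
        exact hkx ((k.injective (k_off _ hkx)).symm ▸ hx)
      · rwa [k_off x hxj]
    refine ⟨h.trans k, h_iso.trans k_iso, fun i hi => ?_,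
      fun i => (k_maps i).comp (h_maps i), fun x hx => ?_⟩
    · obtain rfl | hi := Finset.mem_insert.1 hi
      · have : h (p i) = p i := h_off _ fun l hl =>
          (hdisj (ne_of_mem_of_not_mem hl hj)).notMem_of_mem_right (hp i)
        rw [Homeomorph.trans_apply, this, k_push]
      · rw [Homeomorph.trans_apply, h_push i hi]
        exact k_off _ ((hdisj (ne_of_mem_of_not_mem hi hj)).notMem_of_mem_left (hq i))
    · rw [Homeomorph.trans_apply, h_off x fun i hi => hx i (Finset.mem_insert_of_mem hi)]
      exact k_off x (hx j (Finset.mem_insert_self j s))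

end Push

section Free

variable {X : Type*}

/-- `U` is free for `f` if it is disjoint from its image. -/
def IsFree (f : X → X) (U : Set X) : Prop := ∀ x ∈ U, f x ∉ U

theorem IsFree.mono {f : X → X} {U V : Set X} (hV : IsFree f V) (hUV : U ⊆ V) : IsFree f U :=
  fun x hx hfx => hV x (hUV hx) (hUV hfx)

variable [TopologicalSpace X]

theorem IsFree.exists_isOpen_superset [T2Space X] {f : X → X} {K : Set X} (hfree : IsFree f K)
    (hf : Continuous f) (hK : IsCompact K) : ∃ O, IsOpen O ∧ K ⊆ O ∧ IsFree f O := by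
  have hdisj : Disjoint K (f '' K) := disjoint_right.2 (forall_mem_image.2 hfree)
  obtain ⟨A, B, hA, hB, hKA, hKB, hAB⟩ :=
    SeparatedNhds.of_isCompact_isCompact hK (hK.image hf) hdisj
  exact ⟨A ∩ f ⁻¹' B, hA.inter (hB.preimage hf), subset_inter hKA (image_subset_iff.1 hKB),
    fun x hx hfx => disjoint_left.1 hAB hfx.1 hx.2⟩

theorem exists_isOpen_isPreconnected_isFree [T2Space X] [LocallyConnectedSpace X] {ι : Type*}
    [Finite ι] {f : X → X} (hf : Continuous f) {K : ι → Set X} (hK : ∀ i, IsCompact (K i))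
    (hKc : ∀ i, IsConnected (K i)) (hfree : ∀ i, IsFree f (K i))
    (hdisj : Pairwise (Function.onFun Disjoint K)) {C : Set X} (hC : IsClosed C)
    (hCK : ∀ i, Disjoint C (K i)) :
    ∃ U : ι → Set X, (∀ i, K i ⊆ U i) ∧ (∀ i, IsOpen (U i)) ∧ (∀ i, IsPreconnected (U i)) ∧
      (∀ i, IsFree f (U i)) ∧ Pairwise (Function.onFun Disjoint U) ∧ ∀ i, Disjoint C (U i) := by
  choose O hO hKO hOfree using fun i => (hfree i).exists_isOpen_superset hf (hK i)
  have nhdsSet_disjoint : Pairwise (Function.onFun Disjoint fun i => 𝓝ˢ (K i)) := fun i j hij =>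
    (SeparatedNhds.of_isCompact_isCompact (hK i) (hK j) (hdisj hij)).disjoint_nhdsSet
  obtain ⟨V, hV, hVdisj⟩ := nhdsSet_disjoint.exists_mem_filter_of_disjoint
  choose x hx using fun i => (hKc i).nonempty
  let W (i : ι) : Set X := O i ∩ interior (V i) ∩ Cᶜ
  have hW (i : ι) : IsOpen (W i) := ((hO i).inter isOpen_interior).inter hC.isOpen_compl
  have hKW (i : ι) : K i ⊆ W i := subset_inter
    (subset_inter (hKO i) (subset_interior_iff_mem_nhdsSet.2 (hV i)))
    (hCK i).subset_compl_left
  have hUW (i : ι) : connectedComponentIn (W i) (x i) ⊆ W i := connectedComponentIn_subset _ _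
  refine ⟨fun i => connectedComponentIn (W i) (x i),
    fun i => (hKc i).isPreconnected.subset_connectedComponentIn (hx i) (hKW i),
    fun i => (hW i).connectedComponentIn, fun i => isPreconnected_connectedComponentIn,
    fun i => (hOfree i).mono fun y hy => (hUW i hy).1.1, fun i j hij => ?_,
    fun i => disjoint_right.2 fun y hy => (hUW i hy).2⟩
  exact (hVdisj hij).mono (fun y hy => interior_subset (hUW i hy).1.2)
    fun y hy => interior_subset (hUW j hy).1.2

/-- A perturbation supported in free connected sets cannot create a fixed point. -/
theorem IsBrouwerHomeo.exists_perturbation {E : Type*} [NormedAddCommGroup E] [NormedSpace ℝ E]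
    [CompleteSpace E] {f : E ≃ₜ E} (hf : IsBrouwerHomeo f) {ι : Type*} [Finite ι]
    {K : ι → Set E} (hK : ∀ i, IsCompact (K i)) (hKc : ∀ i, IsPreconnected (K i))
    (hfree : ∀ i, IsFree f (K i)) (hdisj : Pairwise (Function.onFun Disjoint K)) {p q : ι → E}
    (hp : ∀ i, p i ∈ K i) (hq : ∀ i, q i ∈ K i) {C : Set E} (hC : IsClosed C)
    (hCK : ∀ i, Disjoint C (K i)) :
    ∃ g : E ≃ₜ E, IsBrouwerHomeo g ∧ (∀ i x, f x = p i → g x = q i) ∧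
      ∀ x, f x ∈ C → g x = f x := by
  have := Fintype.ofFinite ι
  obtain ⟨U, hKU, hU, hUc, hUfree, hUdisj, hCU⟩ := exists_isOpen_isPreconnected_isFree f.continuous
    hK (fun i => ⟨⟨p i, hp i⟩, hKc i⟩) hfree hdisj hC hCK
  obtain ⟨h, h_iso, h_push, h_maps, h_off⟩ := exists_isotopic_push_finset hU hUc hUdisj
    (fun i => hKU i (hp i)) (fun i => hKU i (hq i)) Finset.univ
  refine ⟨f.trans h, ⟨hf.isotopic.trans h_iso, fun x hx => ?_⟩, fun i x hx => ?_, fun x hx => ?_⟩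
  · rw [Homeomorph.trans_apply] at hx
    by_cases hfx : ∃ i, f x ∈ U i
    · obtain ⟨i, hi⟩ := hfx
      exact hUfree i x (hx ▸ h_maps i hi) hi
    · exact hf.apply_ne_self x (h_off (f x) (fun i _ hi => hfx ⟨i, hi⟩) ▸ hx)
  · rw [Homeomorph.trans_apply, hx, h_push i (Finset.mem_univ i)]
  · exact h_off _ fun i _ => (hCU i).notMem_of_mem_left hx

end Free

/-! ### Brouwer's lemma: a Brouwer homeomorphism of the plane has no periodic point -/

theorem iterate_eq_of_forall_lt {X : Type*} {g : X → X} {x : ℕ → X} {n : ℕ}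
    (h : ∀ i < n, g (x i) = x (i + 1)) : g^[n] (x 0) = x n := by
  induction n with
  | zero => rfl
  | succ n ih =>
    rw [Function.iterate_succ_apply', ih fun i hi => h i (hi.trans n.lt_succ_self),
      h n n.lt_succ_self]

theorem IsFree.image {X : Type*} {f : X → X} {U : Set X} (hU : IsFree f U)
    (hf : Function.Injective f) : IsFree f (f '' U) := by
  rintro _ ⟨x, hx, rfl⟩ hfx
  exact hU x hx (hf.mem_set_image.1 hfx)

/-- Brouwer homeomorphisms of the plane do not return at time `n` to free compact connected sets. -/
def NoFreeReturn (n : ℕ) : Prop :=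
  ∀ ⦃f : ℝ × ℝ ≃ₜ ℝ × ℝ⦄, IsBrouwerHomeo f → ∀ ⦃K : Set (ℝ × ℝ)⦄, IsCompact K →
    IsPreconnected K → IsFree f K → ∀ a ∈ K, f^[n] a ∉ K

theorem NoFreeReturn.iterate_ne_self {n : ℕ} (hn : NoFreeReturn n) {f : ℝ × ℝ ≃ₜ ℝ × ℝ}
    (hf : IsBrouwerHomeo f) (a : ℝ × ℝ) : f^[n] a ≠ a :=
  hn hf isCompact_singleton isPreconnected_singleton
    (fun x hx hfx => hf.apply_ne_self x (hfx.trans hx.symm)) a rfl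

/-- Closing up the first return to a free set by a perturbation turns it into a periodic orbit. -/
theorem noFreeReturn_of_iterate_ne_self {n : ℕ} (ih : ∀ j, 0 < j → j < n → NoFreeReturn j)
    (hper : ∀ f : ℝ × ℝ ≃ₜ ℝ × ℝ, IsBrouwerHomeo f → ∀ a, f^[n] a ≠ a) : NoFreeReturn n := by
  intro f hf K hK hKc hfree a ha hret
  obtain _ | m := n
  · exact hper f hf a rfl
  let C : Set (ℝ × ℝ) := (fun j => f^[j] a) '' Ioo 0 (m + 1)
  have hC : IsClosed C := ((finite_Ioo 0 (m + 1)).image _).isClosed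
  have hCK : Disjoint C K :=
    disjoint_left.2 (forall_mem_image.2 fun j hj => ih j hj.1 hj.2 hf hK hKc hfree a ha)
  obtain ⟨g, hg, g_push, g_eq⟩ := hf.exists_perturbation (ι := Unit) (fun _ => hK) (fun _ => hKc)
    (fun _ => hfree) (fun i j hij => (hij rfl).elim) (fun _ => hret) (fun _ => ha) hC
    (fun _ => hCK)
  have g_orbit : g^[m] a = f^[m] a :=
    iterate_eq_of_forall_lt (x := fun i => f^[i] a) fun i hi => by
      rw [Function.iterate_succ_apply']
      exact g_eq _ ⟨i + 1, ⟨i.succ_pos, by omega⟩, Function.iterate_succ_apply' _ _ _⟩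
  refine hper g hg a ?_
  rw [Function.iterate_succ_apply', g_orbit]
  exact g_push () _ (Function.iterate_succ_apply' _ _ _).symm

theorem noFreeReturn_two : NoFreeReturn 2 := by
  refine noFreeReturn_of_iterate_ne_self (fun j hj hj2 => ?_) fun f hf => hf.apply_apply_ne_self
  obtain rfl : j = 1 := by omega
  exact noFreeReturn_of_iterate_ne_self (fun i _ _ => by omega) fun f hf => hf.apply_ne_self

/-- Along the arc `γ`, the time `t` is the first one at which the arc `γ '' [0, t]` meets its image
under `f`, and there the meeting point `γ t` is the image of `γ s`. -/
structure IsFirstReturnArc {X : Type*} [TopologicalSpace X] (f : X → X) (γ : ℝ → X) (s t : ℝ) :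
    Prop where
  continuous : Continuous γ
  injective : Function.Injective γ
  nonneg : 0 ≤ s
  lt : s < t
  apply_eq : f (γ s) = γ t
  apply_ne : ∀ u ∈ Ico 0 t, ∀ w ∈ Ico 0 t, f (γ u) ≠ γ w

/-- The arc is the segment from `x` to `f x`, up to the first time it meets its image. -/
theorem exists_isFirstReturnArc {E : Type*} [NormedAddCommGroup E] [NormedSpace ℝ E] {f : E ≃ₜ E}
    (hf : ∀ x, f x ≠ x) (x : E) : ∃ γ : ℝ → E, γ 0 = x ∧
      ∃ s t, IsFirstReturnArc f γ s t ∨ IsFirstReturnArc f.symm γ s t := by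
  let γ : ℝ → E := AffineMap.lineMap x (f x)
  have hγ : Continuous γ := AffineMap.lineMap_continuous
  have hγ_inj : Function.Injective γ := AffineMap.lineMap_injective ℝ (hf x).symm
  let S : Set (ℝ × ℝ) := (Icc 0 1 ×ˢ Icc 0 1) ∩
    ({p | p.1 ≤ p.2} ∩ ({p | f (γ p.1) = γ p.2} ∪ {p | f (γ p.2) = γ p.1}))
  have hS : IsCompact S := (isCompact_Icc.prod isCompact_Icc).inter_right
    ((isClosed_le continuous_fst continuous_snd).inter
      ((isClosed_eq (by fun_prop) (by fun_prop)).union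
        (isClosed_eq (by fun_prop) (by fun_prop))))
  have hS_ne : S.Nonempty := ⟨(0, 1), by simp [S, γ]⟩
  obtain ⟨⟨s, t⟩, ⟨⟨hs, ht⟩, hst, hmeet⟩, hmin⟩ :=
    hS.exists_isMinOn hS_ne continuous_snd.continuousOn
  dsimp only at hs ht
  have apply_ne : ∀ u ∈ Ico 0 t, ∀ w ∈ Ico 0 t, f (γ u) ≠ γ w := fun u hu w hw huw => by
    have hu1 : u ∈ Icc (0 : ℝ) 1 := ⟨hu.1, hu.2.le.trans ht.2⟩
    have hw1 : w ∈ Icc (0 : ℝ) 1 := ⟨hw.1, hw.2.le.trans ht.2⟩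
    obtain h | h := le_total u w
    · exact hw.2.not_ge (hmin (show (u, w) ∈ S from ⟨⟨hu1, hw1⟩, h, Or.inl huw⟩))
    · exact hu.2.not_ge (hmin (show (w, u) ∈ S from ⟨⟨hw1, hu1⟩, h, Or.inr huw⟩))
  have lt : s < t := lt_of_le_of_ne hst (by rintro rfl; exact hmeet.elim (hf _) (hf _))
  refine ⟨γ, AffineMap.lineMap_apply_zero _ _, s, t, hmeet.imp (fun h => ?_) fun h => ?_⟩
  · exact ⟨hγ, hγ_inj, hs.1, lt, h, apply_ne⟩
  · exact ⟨hγ, hγ_inj, hs.1, lt, f.symm_apply_eq.2 h.symm, fun u hu w hw h =>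
      apply_ne w hw u hu (f.symm_apply_eq.1 h).symm⟩

namespace IsFirstReturnArc

section Topology

variable {X : Type*} [TopologicalSpace X] {f : X → X} {γ : ℝ → X} {s t m : ℝ}

theorem isCompact_image (h : IsFirstReturnArc f γ s t) (a b : ℝ) : IsCompact (γ '' Icc a b) :=
  isCompact_Icc.image h.continuous

theorem isPreconnected_image (h : IsFirstReturnArc f γ s t) (a b : ℝ) :
    IsPreconnected (γ '' Icc a b) :=
  isPreconnected_Icc.image _ h.continuous.continuousOn

theorem isFree_image (h : IsFirstReturnArc f γ s t) (hm : m < t) : IsFree f (γ '' Icc 0 m) := by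
  rintro _ ⟨u, hu, rfl⟩ ⟨w, hw, huw⟩
  exact h.apply_ne u ⟨hu.1, hu.2.trans_lt hm⟩ w ⟨hw.1, hw.2.trans_lt hm⟩ huw.symm

end Topology

variable {f : ℝ × ℝ ≃ₜ ℝ × ℝ} {γ : ℝ → ℝ × ℝ} {s t m u w : ℝ}

theorem apply_apply_ne_of_lt (h : IsFirstReturnArc f γ s t) (hf : IsBrouwerHomeo f)
    (hu : u ∈ Ico 0 t) (hw : w ∈ Ico 0 t) : f (f (γ u)) ≠ γ w := fun huw =>
  noFreeReturn_two hf (h.isCompact_image 0 (max u w)) (h.isPreconnected_image 0 (max u w))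
    (h.isFree_image (max_lt hu.2 hw.2)) (γ u) ⟨u, ⟨hu.1, le_max_left u w⟩, rfl⟩
    ⟨w, ⟨hw.1, le_max_right u w⟩, huw.symm⟩

theorem apply_apply_ne (h : IsFirstReturnArc f γ s t) (hf : IsBrouwerHomeo f)
    (hu : u ∈ Icc 0 s) (hw : w ∈ Icc 0 t) : f (f (γ u)) ≠ γ w := fun huw => by
  have hu' : u ∈ Ico 0 t := ⟨hu.1, hu.2.trans_lt h.lt⟩
  obtain hwt | rfl := hw.2.lt_or_eq
  · exact h.apply_apply_ne_of_lt hf hu' ⟨hw.1, hwt⟩ huw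
  · exact h.apply_ne u hu' s ⟨h.nonneg, h.lt⟩ (f.injective (huw.trans h.apply_eq.symm))

theorem apply_ne_of_mem_Ioc (h : IsFirstReturnArc f γ s t) (hf : IsBrouwerHomeo f)
    (hu : u ∈ Ioc s t) (hw : w ∈ Icc 0 t) : f (γ u) ≠ γ w := fun huw => by
  obtain hwt | rfl := hw.2.lt_or_eq
  · obtain hut | rfl := hu.2.lt_or_eq
    · exact h.apply_ne u ⟨h.nonneg.trans hu.1.le, hut⟩ w ⟨hw.1, hwt⟩ huw
    · rw [← h.apply_eq] at huw
      exact h.apply_apply_ne_of_lt hf ⟨h.nonneg, h.lt⟩ ⟨hw.1, hwt⟩ huw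
  · exact hu.1.ne' (h.injective (f.injective (huw.trans h.apply_eq.symm)))

/-- The arc running along `γ` from `γ m` to `γ t = f (γ s)` and then backwards along `f ∘ γ` to
`f (γ 0)`. -/
def tail (f : ℝ × ℝ → ℝ × ℝ) (γ : ℝ → ℝ × ℝ) (s t m : ℝ) : Set (ℝ × ℝ) :=
  γ '' Icc m t ∪ f '' (γ '' Icc 0 s)

theorem isCompact_tail (h : IsFirstReturnArc f γ s t) : IsCompact (tail f γ s t m) :=
  (h.isCompact_image m t).union ((h.isCompact_image 0 s).image f.continuous)

theorem isPreconnected_tail (h : IsFirstReturnArc f γ s t) (hm : m ∈ Ioo s t) :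
    IsPreconnected (tail f γ s t m) :=
  IsPreconnected.union (γ t) ⟨t, ⟨hm.2.le, le_rfl⟩, rfl⟩
    ⟨γ s, ⟨s, ⟨h.nonneg, le_rfl⟩, rfl⟩, h.apply_eq⟩ (h.isPreconnected_image m t)
    ((h.isPreconnected_image 0 s).image _ f.continuous.continuousOn)

theorem isFree_tail (h : IsFirstReturnArc f γ s t) (hf : IsBrouwerHomeo f) (hm : m ∈ Ioo s t) :
    IsFree f (tail f γ s t m) := by
  have mem_Ioc {u : ℝ} (hu : u ∈ Icc m t) : u ∈ Ioc s t := ⟨hm.1.trans_le hu.1, hu.2⟩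
  have mem_Icc {u : ℝ} (hu : u ∈ Icc m t) : u ∈ Icc 0 t :=
    ⟨h.nonneg.trans (mem_Ioc hu).1.le, hu.2⟩
  have mem_Ico {u : ℝ} (hu : u ∈ Icc 0 s) : u ∈ Ico 0 t := ⟨hu.1, hu.2.trans_lt h.lt⟩
  rintro _ (⟨u, hu, rfl⟩ | ⟨_, ⟨u, hu, rfl⟩, rfl⟩) (⟨w, hw, huw⟩ | ⟨_, ⟨w, hw, rfl⟩, huw⟩)
  · exact h.apply_ne_of_mem_Ioc hf (mem_Ioc hu) (mem_Icc hw) huw.symm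
  · have := h.injective (f.injective huw)
    exact (mem_Ioc hu).1.not_ge (this ▸ hw.2)
  · exact h.apply_apply_ne hf hu (mem_Icc hw) huw.symm
  · exact h.apply_ne u (mem_Ico hu) w (mem_Ico hw) (f.injective huw).symm

theorem disjoint_image_tail (h : IsFirstReturnArc f γ s t) (hf : IsBrouwerHomeo f)
    (hm : m ∈ Ioo s t) : Disjoint (γ '' Icc 0 m) (f '' tail f γ s t m) := by
  rw [disjoint_left]
  rintro _ ⟨w, hw, rfl⟩ ⟨_, ⟨u, hu, rfl⟩ | ⟨_, ⟨u, hu, rfl⟩, rfl⟩, huw⟩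
  · exact h.apply_ne_of_mem_Ioc hf ⟨hm.1.trans_le hu.1, hu.2⟩ ⟨hw.1, hw.2.trans hm.2.le⟩ huw
  · exact h.apply_apply_ne hf hu ⟨hw.1, hw.2.trans hm.2.le⟩ huw

end IsFirstReturnArc

namespace IsFirstReturnArc

variable {f : ℝ × ℝ ≃ₜ ℝ × ℝ} {γ : ℝ → ℝ × ℝ} {s t m : ℝ}

theorem exists_shortcut (h : IsFirstReturnArc f γ s t) (hf : IsBrouwerHomeo f) (hm : m ∈ Ioo s t)
    {C : Set (ℝ × ℝ)} (hC : IsClosed C) (hCγ : Disjoint C (γ '' Icc 0 m))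
    (hC_tail : Disjoint C (f '' tail f γ s t m)) :
    ∃ g : ℝ × ℝ ≃ₜ ℝ × ℝ, IsBrouwerHomeo g ∧ (∀ x, f x = γ 0 → g x = γ m) ∧
      g (γ m) = f (f (γ 0)) ∧ ∀ x, f x ∈ C → g x = f x := by
  have hm0 : 0 ≤ m := h.nonneg.trans hm.1.le
  have mid_mem_tail : f (γ m) ∈ f '' tail f γ s t m :=
    ⟨γ m, Or.inl ⟨m, ⟨le_rfl, hm.2.le⟩, rfl⟩, rfl⟩
  have end_mem_tail : f (f (γ 0)) ∈ f '' tail f γ s t m :=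
    ⟨f (γ 0), Or.inr ⟨γ 0, ⟨0, ⟨le_rfl, h.nonneg⟩, rfl⟩, rfl⟩, rfl⟩
  have hdisj := h.disjoint_image_tail hf hm
  obtain ⟨g, hg, g_push, g_eq⟩ := hf.exists_perturbation (ι := Bool)
    (K := fun b => cond b (γ '' Icc 0 m) (f '' tail f γ s t m))
    (p := fun b => cond b (γ 0) (f (γ m))) (q := fun b => cond b (γ m) (f (f (γ 0))))
    (Bool.forall_bool.2 ⟨h.isCompact_tail.image f.continuous, h.isCompact_image 0 m⟩)
    (Bool.forall_bool.2 ⟨(h.isPreconnected_tail hm).image _ f.continuous.continuousOn,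
      h.isPreconnected_image 0 m⟩)
    (Bool.forall_bool.2 ⟨(h.isFree_tail hf hm).image f.injective, h.isFree_image hm.2⟩)
    (pairwise_disjoint_on_bool.2 hdisj)
    (Bool.forall_bool.2 ⟨mid_mem_tail, 0, ⟨le_rfl, hm0⟩, rfl⟩)
    (Bool.forall_bool.2 ⟨end_mem_tail, m, ⟨hm0, le_rfl⟩, rfl⟩) hC
    (Bool.forall_bool.2 ⟨hC_tail, hCγ⟩)
  exact ⟨g, hg, g_push true, g_push false _ rfl, g_eq⟩

/-- The shortcut `γ 0 ↦ γ m ↦ f (f (γ 0))` removes one point from the periodic orbit of `γ 0`. -/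
theorem iterate_ne_self (h : IsFirstReturnArc f γ s t) (hf : IsBrouwerHomeo f) {n : ℕ}
    (hn : 3 ≤ n) (ih : ∀ j, 0 < j → j < n → NoFreeReturn j) : f^[n] (γ 0) ≠ γ 0 := by
  intro hper
  obtain ⟨m, hm⟩ : (Ioo s t).Nonempty := nonempty_Ioo.2 h.lt
  obtain ⟨k, rfl⟩ : ∃ k, n = k + 3 := ⟨n - 3, by omega⟩
  let C : Set (ℝ × ℝ) := (fun j => f^[j] (γ 0)) '' Ico 3 (k + 3)
  have hC : IsClosed C := ((finite_Ico 3 (k + 3)).image _).isClosed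
  have hCγ : Disjoint C (γ '' Icc 0 m) := disjoint_left.2 <| forall_mem_image.2 fun j hj =>
    ih j (by have := hj.1; omega) hj.2 hf (h.isCompact_image 0 m) (h.isPreconnected_image 0 m)
      (h.isFree_image hm.2) _ ⟨0, ⟨le_rfl, h.nonneg.trans hm.1.le⟩, rfl⟩
  have hC_tail : Disjoint C (f '' tail f γ s t m) := disjoint_left.2 <|
    forall_mem_image.2 fun j hj hj_tail => by
      obtain ⟨i, rfl⟩ : ∃ i, j = i + 2 := ⟨j - 2, by have := hj.1; omega⟩
      rw [Function.iterate_succ_apply', f.injective.mem_set_image,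
        Function.iterate_succ_apply] at hj_tail
      exact ih i (by have := hj.1; omega) (by have := hj.2; omega) hf h.isCompact_tail
        (h.isPreconnected_tail hm) (h.isFree_tail hf hm) (f (γ 0))
        (Or.inr ⟨γ 0, ⟨0, ⟨le_rfl, h.nonneg⟩, rfl⟩, rfl⟩) hj_tail
  obtain ⟨g, hg, g_start, g_mid, g_eq⟩ := h.exists_shortcut hf hm hC hCγ hC_tail
  have g_orbit : g^[k] (f (f (γ 0))) = f^[k + 2] (γ 0) :=
    iterate_eq_of_forall_lt (x := fun i => f^[i + 2] (γ 0)) fun i hi => by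
      rw [show i + 1 + 2 = (i + 2) + 1 by ring, Function.iterate_succ_apply' f (i + 2)]
      exact g_eq _ ⟨i + 3, ⟨by omega, by omega⟩, Function.iterate_succ_apply' f (i + 2) _⟩
  refine (ih (k + 2) (by omega) (by omega)).iterate_ne_self hg (f (f (γ 0))) ?_
  rw [Function.iterate_succ_apply', Function.iterate_succ_apply', g_orbit,
    g_start (f^[k + 2] (γ 0)) ((Function.iterate_succ_apply' f (k + 2) _).symm.trans hper), g_mid]

end IsFirstReturnArc

theorem iterate_ne_self_of_noFreeReturn {n : ℕ} (hn : 3 ≤ n)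
    (ih : ∀ j, 0 < j → j < n → NoFreeReturn j) {f : ℝ × ℝ ≃ₜ ℝ × ℝ} (hf : IsBrouwerHomeo f)
    (x : ℝ × ℝ) : f^[n] x ≠ x := by
  obtain ⟨γ, rfl, s, t, h | h⟩ := exists_isFirstReturnArc hf.apply_ne_self x
  · exact h.iterate_ne_self hf hn ih
  · intro hper
    refine h.iterate_ne_self hf.symm hn ih ?_
    conv_lhs => rw [← hper]
    exact Function.LeftInverse.iterate f.symm_apply_apply n (γ 0)

theorem noFreeReturn {n : ℕ} (hn : 0 < n) : NoFreeReturn n := by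
  induction n using Nat.strong_induction_on with
  | _ n ih =>
    refine noFreeReturn_of_iterate_ne_self (fun j hj hjn => ih j hjn hj) fun f hf a => ?_
    obtain rfl | rfl | h3 : n = 1 ∨ n = 2 ∨ 3 ≤ n := by omega
    · exact hf.apply_ne_self a
    · exact hf.apply_apply_ne_self a
    · exact iterate_ne_self_of_noFreeReturn h3 (fun j hj hjn => ih j hjn hj) hf a

theorem IsBrouwerHomeo.iterate_ne_self {f : ℝ × ℝ ≃ₜ ℝ × ℝ} (hf : IsBrouwerHomeo f) {n : ℕ}
    (hn : 0 < n) (a : ℝ × ℝ) : f^[n] a ≠ a :=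
  (noFreeReturn hn).iterate_ne_self hf a

/-! ### Brouwer homeomorphisms have no closed pseudo-orbits -/

section ClosedChains

variable {X : Type*} {R : X → X → Prop} {a b c : X} {m n : ℕ}

/-- `b` is reached from `a` by a chain of exactly `n` steps of the relation `R`. -/
def ReachesIn (R : X → X → Prop) (n : ℕ) (a b : X) : Prop :=
  ∃ x : ℕ → X, x 0 = a ∧ x n = b ∧ ∀ i < n, R (x i) (x (i + 1))

theorem reachesIn_of_forall_mem_Ico {x : ℕ → X} (hmn : m ≤ n)
    (hx : ∀ i ∈ Ico m n, R (x i) (x (i + 1))) : ReachesIn R (n - m) (x m) (x n) :=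
  ⟨fun i => x (m + i), rfl, congrArg x (Nat.add_sub_cancel' hmn), fun i hi =>
    hx (m + i) ⟨m.le_add_right i, by omega⟩⟩

theorem ReachesIn.tail (hab : ReachesIn R n a b) (hbc : R b c) : ReachesIn R (n + 1) a c := by
  obtain ⟨x, rfl, rfl, hx⟩ := hab
  refine ⟨fun i => if i ≤ n then x i else c, by simp, by simp, fun i hi => ?_⟩
  obtain hin | rfl := (Nat.lt_succ_iff.1 hi).lt_or_eq
  · simpa only [hin.le, Nat.succ_le_iff.2 hin, if_true] using hx i hin
  · simpa using hbc

theorem ReachesIn.trans (hab : ReachesIn R m a b) (hbc : ReachesIn R n b c) :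
    ReachesIn R (m + n) a c := by
  obtain ⟨x, rfl, rfl, hx⟩ := hbc
  induction n with
  | zero => exact hab
  | succ n ih => exact (ih fun i hi => hx i (hi.trans n.lt_succ_self)).tail (hx n n.lt_succ_self)

theorem exists_reachesIn_of_transGen (h : Relation.TransGen R a b) :
    ∃ n, 0 < n ∧ ReachesIn R n a b := by
  have reachesIn_zero : ReachesIn R 0 a a := ⟨fun _ => a, rfl, rfl, by simp⟩
  induction h with
  | single hab => exact ⟨1, one_pos, reachesIn_zero.tail hab⟩
  | tail _ hbc ih =>
    obtain ⟨n, -, hn⟩ := ih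
    exact ⟨n + 1, n.succ_pos, hn.tail hbc⟩

/-- A closed chain of minimal length has no chords. -/
theorem exists_chordless_of_transGen_self (h : Relation.TransGen R a a) :
    ∃ (n : ℕ) (x : ℕ → X), 0 < n ∧ x n = x 0 ∧ (∀ i < n, R (x i) (x (i + 1))) ∧
      ∀ i j, i < j → j < n → ¬ R (x i) (x (j + 1)) ∧ ¬ R (x j) (x (i + 1)) := by
  classical
  have hex : ∃ n, 0 < n ∧ ∃ a, ReachesIn R n a a :=
    let ⟨n, hn, hna⟩ := exists_reachesIn_of_transGen h
    ⟨n, hn, a, hna⟩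
  obtain ⟨hn, _, x, rfl, hx0, hx⟩ := Nat.find_spec hex
  refine ⟨Nat.find hex, x, hn, hx0, hx, fun i j hij hj => ⟨fun hR => ?_, fun hR => ?_⟩⟩
  · have to_i := reachesIn_of_forall_mem_Ico (x := x) i.zero_le fun k hk => hx k (by
      have := hk.2; omega)
    have from_j := reachesIn_of_forall_mem_Ico (x := x) (Nat.succ_le_iff.2 hj) fun k hk =>
      hx k hk.2
    rw [hx0] at from_j
    exact Nat.find_min hex (by omega) ⟨by omega, x 0, (to_i.tail hR).trans from_j⟩
  · have i_to_j := reachesIn_of_forall_mem_Ico (x := x) (Nat.succ_le_iff.2 hij) fun k hk =>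
      hx k (hk.2.trans hj)
    exact Nat.find_min hex (by omega) ⟨by omega, x (i + 1), i_to_j.tail hR⟩

end ClosedChains

section Jump

variable {E : Type*} [NormedAddCommGroup E] [NormedSpace ℝ E] {S : Set E} {ε : ℝ} {p q p' q' z : E}

/-- The points `p` and `q` are equal, or they are `ε`-close points of `S`. -/
def Jump (S : Set E) (ε : ℝ) (p q : E) : Prop := p = q ∨ p ∈ S ∧ q ∈ S ∧ dist p q < ε

theorem Jump.of_mem_segment (h : Jump S ε p q) (hS : Convex ℝ S) (hz : z ∈ segment ℝ p q) :
    Jump S ε z q := by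
  obtain rfl | ⟨hp, hq, hpq⟩ := h
  · exact Or.inl (by simpa using hz)
  · refine Or.inr ⟨hS.segment_subset hp hq hz, hq, ?_⟩
    linarith [dist_add_dist_of_mem_segment hz, dist_nonneg (x := p) (y := z)]

theorem Jump.exchange (h : Jump S ε p q) (h' : Jump S ε p' q') (hS : Convex ℝ S)
    (hz : z ∈ segment ℝ p q) (hz' : z ∈ segment ℝ p' q') : Jump S ε p q' ∨ Jump S ε p' q := by
  rcases h with rfl | ⟨hp, hq, hpq⟩
  · obtain rfl : z = p := by simpa using hz
    exact Or.inl (h'.of_mem_segment hS hz')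
  rcases h' with rfl | ⟨hp', hq', hpq'⟩
  · obtain rfl : z = p' := by simpa using hz'
    exact Or.inr (Jump.of_mem_segment (Or.inr ⟨hp, hq, hpq⟩) hS hz)
  by_cases hlt : dist p q' < ε
  · exact Or.inl (Or.inr ⟨hp, hq', hlt⟩)
  · refine Or.inr (Or.inr ⟨hp', hq, ?_⟩)
    linarith [dist_add_dist_of_mem_segment hz, dist_add_dist_of_mem_segment hz',
      dist_triangle p z q', dist_triangle p' z q]

theorem Jump.isFree_segment {f : E → E} (h : Jump S ε p q) (hf : ∀ x, f x ≠ x) (hS : Convex ℝ S)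
    (hε : ∀ z ∈ S, ε ≤ dist (f z) z) : IsFree f (segment ℝ p q) := by
  intro u hu hfu
  rcases h with rfl | ⟨hp, hq, hpq⟩
  · rw [segment_same] at hu hfu
    exact hf u (hfu.trans hu.symm)
  · linarith [dist_add_dist_of_mem_segment hu, dist_add_dist_of_mem_segment hfu,
      hε u (hS.segment_subset hp hq hu), dist_triangle_left (f u) u p,
      dist_triangle_right (f u) u q]

theorem isCompact_segment (p q : E) : IsCompact (segment ℝ p q) := by
  rw [segment_eq_image_lineMap]
  exact isCompact_Icc.image AffineMap.lineMap_continuous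

/-- By minimality the jump segments of a shortest closed chain are pairwise disjoint, so that all
jumps can be absorbed at once into a perturbation of `f`, which then has a periodic point. -/
theorem IsBrouwerHomeo.not_transGen_jump_self {f : ℝ × ℝ ≃ₜ ℝ × ℝ} (hf : IsBrouwerHomeo f)
    {S : Set (ℝ × ℝ)} (hS : Convex ℝ S) {ε : ℝ} (hε : ∀ z ∈ S, ε ≤ dist (f z) z) (a : ℝ × ℝ) :
    ¬ Relation.TransGen (fun u v => Jump S ε (f u) v) a a := by
  intro hcycle
  obtain ⟨n, x, hn, hxn, hx, chordless⟩ := exists_chordless_of_transGen_self hcycle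
  let K (i : Fin n) : Set (ℝ × ℝ) := segment ℝ (f (x i)) (x (i + 1))
  have disjoint_of_lt (i j : Fin n) (hij : i < j) : Disjoint (K i) (K j) := by
    refine disjoint_left.2 fun z hzi hzj => ?_
    exact ((hx i i.2).exchange (hx j j.2) hS hzi hzj).elim (chordless i j hij j.2).1
      (chordless i j hij j.2).2
  have hdisj : Pairwise (Function.onFun Disjoint K) := fun i j hij =>
    (lt_or_gt_of_ne hij).elim (disjoint_of_lt i j) fun h => (disjoint_of_lt j i h).symm
  obtain ⟨g, hg, g_push, -⟩ := hf.exists_perturbation (K := K) (p := fun i => f (x i))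
    (q := fun i => x (i + 1)) (C := ∅) (fun i => isCompact_segment _ _)
    (fun i => (convex_segment _ _).isPreconnected)
    (fun i => (hx i i.2).isFree_segment hf.apply_ne_self hS hε) hdisj
    (fun i => left_mem_segment ℝ _ _) (fun i => right_mem_segment ℝ _ _) isClosed_empty
    (fun i => empty_disjoint _)
  have g_orbit : g^[n] (x 0) = x n := iterate_eq_of_forall_lt fun i hi => g_push ⟨i, hi⟩ _ rfl
  exact hg.iterate_ne_self hn (x 0) (g_orbit.trans hxn)

end Jump

/-! ### Deck translations and horizontal strips -/

/-- The vector `(k, 0)` of a deck translation of the universal covering `pA`. -/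
def deck : ℤ →+ ℝ × ℝ := (AddMonoidHom.inl ℝ ℝ).comp (Int.castAddHom ℝ)

@[simp]
theorem deck_fst (k : ℤ) : (deck k).1 = k := rfl

@[simp]
theorem deck_snd (k : ℤ) : (deck k).2 = 0 := rfl

/-- `g` commutes with the deck translations, as lifts of maps isotopic to the identity do. -/
def IsDeckEquivariant (g : ℝ × ℝ → ℝ × ℝ) : Prop := ∀ z k, g (z + deck k) = g z + deck k

/-- The horizontal strip `ℝ × [-M, M]`. -/
def strip (M : ℝ) : Set (ℝ × ℝ) := univ ×ˢ Icc (-M) M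

section Deck

variable {g : ℝ × ℝ → ℝ × ℝ} {M N : ℝ} {z : ℝ × ℝ}

theorem IsDeckEquivariant.iterate (hg : IsDeckEquivariant g) (n : ℕ) : IsDeckEquivariant g^[n] :=
  fun z k => Function.Commute.iterate_left (g := fun w => w + deck k) (fun w => hg w k) n z

theorem IsDeckEquivariant.symm {g : ℝ × ℝ ≃ₜ ℝ × ℝ} (hg : IsDeckEquivariant g) :
    IsDeckEquivariant g.symm := fun z k =>
  g.symm_apply_eq.2 (by rw [hg, g.apply_symm_apply])

theorem mem_strip : z ∈ strip M ↔ |z.2| ≤ M := by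
  simp only [strip, mem_prod, mem_univ, true_and, mem_Icc, abs_le]

theorem add_deck_mem_strip {k : ℤ} : z + deck k ∈ strip M ↔ z ∈ strip M := by
  simp only [mem_strip, Prod.snd_add, deck_snd, add_zero]

theorem strip_mono (hMN : M ≤ N) : strip M ⊆ strip N :=
  prod_mono Subset.rfl (Icc_subset_Icc (neg_le_neg hMN) hMN)

theorem convex_strip (M : ℝ) : Convex ℝ (strip M) := convex_univ.prod (convex_Icc _ _)

theorem strip_subset_closure_interior (hM : 0 < M) : strip M ⊆ closure (interior (strip M)) := by
  have zero_mem : (0 : ℝ × ℝ) ∈ interior (strip M) := by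
    simpa [strip, interior_prod_eq] using hM
  rw [(convex_strip M).closure_interior_eq_closure_of_nonempty_interior ⟨0, zero_mem⟩]
  exact subset_closure

theorem exists_mem_rectangle_add_deck_eq (hz : z ∈ strip M) :
    ∃ w ∈ Icc (0 : ℝ) 1 ×ˢ Icc (-M) M, ∃ k : ℤ, w + deck k = z :=
  ⟨(Int.fract z.1, z.2), ⟨⟨Int.fract_nonneg _, (Int.fract_lt_one _).le⟩, hz.2⟩, ⌊z.1⌋,
    Prod.ext (Int.fract_add_floor z.1) (add_zero z.2)⟩

theorem isCompact_image_strip {Y : Type*} [TopologicalSpace Y] {φ : ℝ × ℝ → Y} (hφ : Continuous φ)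
    (periodic : ∀ z k, φ (z + deck k) = φ z) (M : ℝ) : IsCompact (φ '' strip M) := by
  convert (isCompact_Icc.prod isCompact_Icc).image hφ using 1
  refine Subset.antisymm (image_subset_iff.2 fun z hz => ?_)
    (image_mono (prod_mono (subset_univ (Icc 0 1)) Subset.rfl))
  obtain ⟨w, hw, k, rfl⟩ := exists_mem_rectangle_add_deck_eq hz
  exact ⟨w, hw, (periodic w k).symm⟩

theorem IsDeckEquivariant.isCompact_image_displacement (hg : IsDeckEquivariant g)
    (hgc : Continuous g) (M : ℝ) : IsCompact ((fun z => g z - z) '' strip M) :=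
  isCompact_image_strip (by fun_prop) (fun z k => by rw [hg, add_sub_add_right_eq_sub]) M

theorem IsDeckEquivariant.exists_displacement_le (hg : IsDeckEquivariant g) (hgc : Continuous g)
    (M : ℝ) : ∃ C, ∀ z ∈ strip M, ‖g z - z‖ ≤ C := by
  obtain ⟨C, hC⟩ := (hg.isCompact_image_displacement hgc M).isBounded.exists_norm_le
  exact ⟨C, fun z hz => hC _ (mem_image_of_mem _ hz)⟩

theorem IsDeckEquivariant.exists_le_dist (hg : IsDeckEquivariant g) (hgc : Continuous g)
    (hne : ∀ z, g z ≠ z) (M : ℝ) : ∃ ε, 0 < ε ∧ ∀ z ∈ strip M, ε ≤ dist (g z) z := by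
  have zero_notMem : (0 : ℝ × ℝ) ∉ (fun z => g z - z) '' strip M := fun ⟨z, _, hz⟩ =>
    hne z (sub_eq_zero.1 hz)
  obtain ⟨ε, hε, ball_subset⟩ := Metric.mem_nhds_iff.1
    ((hg.isCompact_image_displacement hgc M).isClosed.isOpen_compl.mem_nhds zero_notMem)
  refine ⟨ε, hε, fun z hz => not_lt.1 fun hlt => ?_⟩
  exact ball_subset (by rwa [mem_ball_zero_iff, ← dist_eq_norm]) (mem_image_of_mem _ hz)

theorem exists_forall_mem_strip_abs_le {U : Set (ℝ × ℝ)} (hU : IsOpen U)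
    (hcover : ∀ z ∈ strip M, ∃ i : ℤ, z + deck i ∈ U) :
    ∃ C : ℝ, ∀ z ∈ strip M, ∃ i : ℤ, z + deck i ∈ U ∧ |(z + deck i).1| ≤ C := by
  let V (n : ℕ) : Set (ℝ × ℝ) := ⋃ i : ℤ, (· + deck i) ⁻¹' (U ∩ {w | |w.1| < n})
  have V_open (n : ℕ) : IsOpen (V n) := isOpen_iUnion fun i =>
    (hU.inter (isOpen_lt (by fun_prop) continuous_const)).preimage (by fun_prop)
  have V_mono : Monotone V := fun m n hmn => iUnion_mono fun i z hz =>
    ⟨hz.1, lt_of_lt_of_le (b := (m : ℝ)) hz.2 (Nat.cast_le.2 hmn)⟩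
  obtain ⟨n, hn⟩ := (isCompact_Icc.prod isCompact_Icc).elim_directed_cover
    (s := Icc (0 : ℝ) 1 ×ˢ Icc (-M) M) V V_open (fun w hw => by
      obtain ⟨i, hi⟩ := hcover w ⟨mem_univ _, hw.2⟩
      obtain ⟨n, hn⟩ := exists_nat_gt |(w + deck i).1|
      exact mem_iUnion.2 ⟨n, mem_iUnion.2 ⟨i, hi, hn⟩⟩) V_mono.directed_le
  refine ⟨n, fun z hz => ?_⟩
  obtain ⟨w, hw, k, rfl⟩ := exists_mem_rectangle_add_deck_eq hz
  obtain ⟨i, hi, hlt⟩ := mem_iUnion.1 (hn hw)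
  have hwi : w + deck k + deck (i - k) = w + deck i := by
    rw [add_assoc, ← map_add, add_sub_cancel]
  exact ⟨i - k, by rwa [hwi], by rw [hwi]; exact hlt.le⟩

end Deck

/-! ### Pseudo-orbits in a strip -/

section Link

variable {X : Type*} [PseudoMetricSpace X] {g : X → X} {S : Set X} {η : ℝ}

/-- Some orbit segment of `g` of positive length with endpoints in `S` starts `η`-close to `a` and
ends `η`-close to `b`. -/
def Link (g : X → X) (S : Set X) (η : ℝ) (a b : X) : Prop :=
  ∃ n, 0 < n ∧ ∃ y ∈ S, g^[n] y ∈ S ∧ dist a y < η ∧ dist (g^[n] y) b < η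

theorem link_iterate (hη : 0 < η) {n : ℕ} (hn : 0 < n) {z : X} (hz : z ∈ S) (hgz : g^[n] z ∈ S) :
    Link g S η z (g^[n] z) :=
  ⟨n, hn, z, hz, hgz, by rwa [dist_self], by rwa [dist_self]⟩

theorem isOpen_setOf_link_right (a : X) : IsOpen {b | Link g S η a b} := by
  refine Metric.isOpen_iff.2 fun b ⟨n, hn, y, hy, hgy, hay, hyb⟩ => ?_
  refine ⟨η - dist (g^[n] y) b, sub_pos.2 hyb, fun c hc => ⟨n, hn, y, hy, hgy, hay, ?_⟩⟩
  linarith [dist_triangle_right (g^[n] y) c b, Metric.mem_ball.1 hc]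

theorem isOpen_setOf_link_left (b : X) : IsOpen {a | Link g S η a b} := by
  refine Metric.isOpen_iff.2 fun a ⟨n, hn, y, hy, hgy, hay, hyb⟩ => ?_
  refine ⟨η - dist a y, sub_pos.2 hay, fun c hc => ⟨n, hn, y, hy, hgy, ?_, hyb⟩⟩
  linarith [dist_triangle c a y, Metric.mem_ball.1 hc]

theorem isOpen_setOf_transGen_right {X : Type*} [TopologicalSpace X] {R : X → X → Prop}
    (hR : ∀ a, IsOpen {b | R a b}) (a : X) : IsOpen {b | Relation.TransGen R a b} := by
  simp only [Relation.TransGen.tail'_iff, ofPred_exists, ofPred_and]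
  exact isOpen_iUnion fun c => isOpen_const.inter (hR c)

theorem isOpen_setOf_transGen_left {X : Type*} [TopologicalSpace X] {R : X → X → Prop}
    (hR : ∀ b, IsOpen {a | R a b}) (b : X) : IsOpen {a | Relation.TransGen R a b} := by
  simpa only [Relation.transGen_swap] using isOpen_setOf_transGen_right (R := Function.swap R) hR b

end Link

/-- Two consecutive links join up by a jump of length less than `2 * η`. -/
theorem exists_reflTransGen_jump_of_transGen_link {E : Type*} [NormedAddCommGroup E] {g : E → E}
    {S : Set E} {η : ℝ} {a b : E} (h : Relation.TransGen (Link g S η) a b) :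
    ∃ y ∈ S, dist a y < η ∧ ∃ u, g u ∈ S ∧ dist (g u) b < η ∧
      Relation.ReflTransGen (fun v w => Jump S (2 * η) (g v) w) y u := by
  have iterate_chain (n : ℕ) (y : E) :
      Relation.ReflTransGen (fun v w => Jump S (2 * η) (g v) w) y (g^[n] y) := by
    induction n with
    | zero => exact .refl
    | succ n ih => exact ih.tail (Or.inl (Function.iterate_succ_apply' g n y).symm)
  have of_link {a b : E} : Link g S η a b → ∃ y ∈ S, dist a y < η ∧ ∃ u, g u ∈ S ∧
      dist (g u) b < η ∧ Relation.ReflTransGen (fun v w => Jump S (2 * η) (g v) w) y u := by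
    rintro ⟨_ | n, hn, y, hy, hgy, hay, hyb⟩
    · exact absurd hn (lt_irrefl 0)
    · rw [Function.iterate_succ_apply'] at hgy hyb
      exact ⟨y, hy, hay, g^[n] y, hgy, hyb, iterate_chain n y⟩
  induction h with
  | single hab => exact of_link hab
  | @tail b c _ hbc ih =>
    obtain ⟨y, hy, hay, u, hu, hub, hyu⟩ := ih
    obtain ⟨y', hy', hby', u', hu', huc', hyu'⟩ := of_link hbc
    have jump : Jump S (2 * η) (g u) y' :=
      Or.inr ⟨hu, hy', by linarith [dist_triangle (g u) b y']⟩
    exact ⟨y, hy, hay, u', hu', huc', (hyu.tail jump).trans hyu'⟩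

theorem IsBrouwerHomeo.not_transGen_link_self {g : ℝ × ℝ ≃ₜ ℝ × ℝ} (hg : IsBrouwerHomeo g)
    {S : Set (ℝ × ℝ)} (hS : Convex ℝ S) {η : ℝ} (hη : ∀ z ∈ S, 2 * η ≤ dist (g z) z) (a : ℝ × ℝ) :
    ¬ Relation.TransGen (Link g S η) a a := by
  intro h
  obtain ⟨y, hy, hay, u, hu, hua, hyu⟩ := exists_reflTransGen_jump_of_transGen_link h
  have jump : Jump S (2 * η) (g u) y := Or.inr ⟨hu, hy, by linarith [dist_triangle (g u) a y]⟩
  exact hg.not_transGen_jump_self hS hη y (.tail' hyu jump)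

/-- The map which `g` induces on the annulus is nonwandering: up to a deck translation, some orbit
of `g` returns to any given nonempty open set. -/
def IsNonwanderingModDeck (g : ℝ × ℝ → ℝ × ℝ) : Prop :=
  ∀ V : Set (ℝ × ℝ), IsOpen V → V.Nonempty → ∃ y ∈ V, ∃ n, 0 < n ∧ ∃ k : ℤ, g^[n] y + deck k ∈ V

section StripLink

variable {g : ℝ × ℝ → ℝ × ℝ} {M η : ℝ} {a b : ℝ × ℝ}

theorem IsDeckEquivariant.link_add_deck (hg : IsDeckEquivariant g) (k : ℤ)
    (h : Link g (strip M) η a b) : Link g (strip M) η (a + deck k) (b + deck k) := by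
  obtain ⟨n, hn, y, hy, hgy, hay, hyb⟩ := h
  refine ⟨n, hn, y + deck k, add_deck_mem_strip.2 hy, ?_, by rwa [dist_add_right], ?_⟩
  · rwa [hg.iterate, add_deck_mem_strip]
  · rwa [hg.iterate, dist_add_right]

theorem IsDeckEquivariant.transGen_link_add_deck (hg : IsDeckEquivariant g) (k : ℤ)
    (h : Relation.TransGen (Link g (strip M) η) a b) :
    Relation.TransGen (Link g (strip M) η) (a + deck k) (b + deck k) :=
  Relation.TransGen.lift (· + deck k) (fun _ _ => hg.link_add_deck k) _ _ h

theorem IsNonwanderingModDeck.exists_link (hrec : IsNonwanderingModDeck g) (hM : 0 < M)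
    (hη : 0 < η) (ha : a ∈ strip M) : ∃ k : ℤ, ∀ b ∈ Metric.ball a (η / 2),
      ∀ c ∈ Metric.ball a (η / 2), Link g (strip M) η b (c + deck k) := by
  have nonempty : (Metric.ball a (η / 2) ∩ interior (strip M)).Nonempty :=
    mem_closure_iff.1 (strip_subset_closure_interior hM ha) _ Metric.isOpen_ball
      (Metric.mem_ball_self (half_pos hη))
  obtain ⟨y, ⟨hya, hy⟩, n, hn, k, hka, hk⟩ :=
    hrec _ (Metric.isOpen_ball.inter isOpen_interior) nonempty
  rw [Metric.mem_ball] at hya hka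
  refine ⟨-k, fun b hb c hc => ⟨n, hn, y, interior_subset hy,
    add_deck_mem_strip.1 (interior_subset hk), ?_, ?_⟩⟩
  · linarith [dist_triangle_right b y a, Metric.mem_ball.1 hb]
  · rw [← dist_add_right _ _ (deck k), add_assoc, ← map_add, neg_add_cancel, map_zero, add_zero]
    linarith [dist_triangle_right (g^[n] y + deck k) c a, Metric.mem_ball.1 hc]

theorem IsNonwanderingModDeck.exists_transGen_link (hrec : IsNonwanderingModDeck g)
    (hg : IsDeckEquivariant g) (hM : 0 < M) (hη : 0 < η) (ha : a ∈ strip M) (hb : b ∈ strip M) :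
    ∃ j : ℤ, Relation.TransGen (Link g (strip M) η) a (b + deck j) := by
  refine (convex_strip M).isPreconnected.induction₂'
    (fun w z => ∃ j : ℤ, Relation.TransGen (Link g (strip M) η) w (z + deck j)) ?_ ?_ ha hb
  · intro c hc
    obtain ⟨k, hk⟩ := hrec.exists_link hM hη hc
    have c_mem := Metric.mem_ball_self (x := c) (half_pos hη)
    filter_upwards [nhdsWithin_le_nhds (Metric.ball_mem_nhds c (half_pos hη))] with z hz
    exact ⟨⟨k, .single (hk c c_mem z hz)⟩, ⟨k, .single (hk z hz c c_mem)⟩⟩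
  · rintro x y z - - - ⟨i, hxy⟩ ⟨j, hyz⟩
    refine ⟨j + i, hxy.trans ?_⟩
    simpa only [map_add, add_assoc] using hg.transGen_link_add_deck i hyz

end StripLink

/-- The horizontal displacements along the orbit segments of `g` of positive length with endpoints
in `strip M`. -/
def stripDrifts (g : ℝ × ℝ → ℝ × ℝ) (M : ℝ) : Set ℝ :=
  {d | ∃ z n, 0 < n ∧ z ∈ strip M ∧ g^[n] z ∈ strip M ∧ (g^[n] z).1 - z.1 = d}

theorem stripDrifts_mono {g : ℝ × ℝ → ℝ × ℝ} {M N : ℝ} (hMN : M ≤ N) :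
    stripDrifts g M ⊆ stripDrifts g N := fun _ ⟨z, n, hn, hz, hgz, hd⟩ =>
  ⟨z, n, hn, strip_mono hMN hz, strip_mono hMN hgz, hd⟩

/-- Both endpoints of an orbit segment are joined to translates of `0` by pseudo-orbits, and by
compactness of the strip modulo deck translations this changes the drift by a bounded amount. -/
theorem IsNonwanderingModDeck.exists_transGen_link_zero_deck {g : ℝ × ℝ → ℝ × ℝ}
    (hrec : IsNonwanderingModDeck g) (hg : IsDeckEquivariant g) {M η : ℝ} (hM : 0 < M)
    (hη : 0 < η) : ∃ C : ℝ, ∀ d ∈ stripDrifts g M, ∃ p : ℤ, |p - d| ≤ C ∧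
      Relation.TransGen (Link g (strip M) η) 0 (deck p) := by
  have zero_mem : (0 : ℝ × ℝ) ∈ strip M := mem_strip.2 (by simpa using hM.le)
  obtain ⟨A, from_zero⟩ := exists_forall_mem_strip_abs_le
    (isOpen_setOf_transGen_right (isOpen_setOf_link_right (g := g) (S := strip M) (η := η)) 0)
    fun z hz => hrec.exists_transGen_link hg hM hη zero_mem hz
  obtain ⟨B, to_zero⟩ := exists_forall_mem_strip_abs_le
    (isOpen_setOf_transGen_left (isOpen_setOf_link_left (g := g) (S := strip M) (η := η)) 0)
    fun z hz => by
      obtain ⟨j, hj⟩ := hrec.exists_transGen_link hg hM hη hz zero_mem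
      exact ⟨-j, by simpa using hg.transGen_link_add_deck (-j) hj⟩
  refine ⟨A + B, ?_⟩
  rintro _ ⟨z, n, hn, hz, hgz, rfl⟩
  obtain ⟨i, zero_to_z, hi⟩ := from_zero z hz
  obtain ⟨j, gz_to_zero, hj⟩ := to_zero _ hgz
  have z_to_gz := hg.link_add_deck i (link_iterate hη hn hz hgz)
  have gz_to_deck : Relation.TransGen (Link g (strip M) η) (g^[n] z + deck i) (deck (i - j)) := by
    simpa [add_assoc, ← map_add] using hg.transGen_link_add_deck (i - j) gz_to_zero
  refine ⟨i - j, ?_, (zero_to_z.tail z_to_gz).trans gz_to_deck⟩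
  calc |((i - j : ℤ) : ℝ) - ((g^[n] z).1 - z.1)|
      = |(z + deck i).1 - (g^[n] z + deck j).1| := by
        simp only [Prod.fst_add, deck_fst, Int.cast_sub]; ring_nf
    _ ≤ A + B := (abs_sub _ _).trans (add_le_add hi hj)

theorem zero_mem_of_pos_mem_of_neg_mem {S : Set ℤ} (add_mem : ∀ a ∈ S, ∀ b ∈ S, a + b ∈ S) {p q : ℤ}
    (hp : p ∈ S) (p_pos : 0 < p) (hq : q ∈ S) (q_neg : q < 0) : (0 : ℤ) ∈ S := by
  have mul_mem (a : ℤ) (ha : a ∈ S) (n : ℤ) (hn : 1 ≤ n) : n * a ∈ S := by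
    induction n, hn using Int.leInduction with
    | base => rwa [one_mul]
    | succ n _ ih => rw [add_one_mul]; exact add_mem _ ih _ ha
  convert add_mem _ (mul_mem p hp (-q) (by omega)) _ (mul_mem q hq p (by omega)) using 1
  ring

/-- Drifts that are unbounded on both sides would close up to a periodic pseudo-orbit. -/
theorem IsBrouwerHomeo.bddAbove_or_bddBelow_stripDrifts {g : ℝ × ℝ ≃ₜ ℝ × ℝ}
    (hg : IsBrouwerHomeo g) (hdeck : IsDeckEquivariant g) (hrec : IsNonwanderingModDeck g) {M : ℝ}
    (hM : 0 < M) : BddAbove (stripDrifts g M) ∨ BddBelow (stripDrifts g M) := by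
  by_contra! h
  obtain ⟨ε, hε, hε_le⟩ := hdeck.exists_le_dist g.continuous hg.apply_ne_self M
  obtain ⟨C, hC⟩ := hrec.exists_transGen_link_zero_deck hdeck hM (half_pos hε)
  let P : Set ℤ := {p | Relation.TransGen (Link g (strip M) (ε / 2)) 0 (deck p)}
  have P_add (p : ℤ) (hp : p ∈ P) (q : ℤ) (hq : q ∈ P) : p + q ∈ P :=
    hp.trans (by simpa [add_comm] using hdeck.transGen_link_add_deck p hq)
  obtain ⟨d, hd, C_lt⟩ := not_bddAbove_iff.1 h.1 C
  obtain ⟨p, hpd, hp⟩ := hC d hd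
  obtain ⟨e, he, lt_neg_C⟩ := not_bddBelow_iff.1 h.2 (-C)
  obtain ⟨q, hqe, hq⟩ := hC e he
  have p_pos : (0 : ℝ) < p := by linarith [(abs_le.1 hpd).1]
  have q_neg : (q : ℝ) < 0 := by linarith [(abs_le.1 hqe).2]
  have closed : Relation.TransGen (Link g (strip M) (ε / 2)) 0 (deck 0) :=
    zero_mem_of_pos_mem_of_neg_mem P_add hp (Int.cast_pos.1 p_pos) hq (Int.cast_lt_zero.1 q_neg)
  rw [map_zero] at closed
  refine hg.not_transGen_link_self (convex_strip M) (fun z hz => ?_) 0 closed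
  rw [mul_div_cancel₀ ε two_ne_zero]
  exact hε_le z hz

/-! ### Nonwandering maps -/

section Nonwandering

variable {X : Type*} [TopologicalSpace X] {f : X → X}

/-- Every nonempty open set contains a point some positive iterate of which lies in it again. -/
def IsNonwandering (f : X → X) : Prop :=
  ∀ U : Set X, IsOpen U → U.Nonempty → ∃ x ∈ U, ∃ n, 0 < n ∧ f^[n] x ∈ U

theorem IsNonwandering.exists_card_eq_forall_iterate_mem (hf : IsNonwandering f)
    (hfc : Continuous f) (k : ℕ) {U : Set X} (hU : IsOpen U) (hne : U.Nonempty) :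
    ∃ (x : X) (T : Finset ℕ), T.card = k + 1 ∧ ∀ t ∈ T, f^[t] x ∈ U := by
  induction k generalizing U with
  | zero =>
    obtain ⟨x, hx⟩ := hne
    exact ⟨x, {0}, rfl, by simpa using hx⟩
  | succ k ih =>
    obtain ⟨x, hx, n, hn, hfx⟩ := hf U hU hne
    obtain ⟨y, T, hT, hy⟩ := ih (hU.inter (hU.preimage (hfc.iterate n))) ⟨x, hx, hfx⟩
    have hT_ne : T.Nonempty := Finset.card_pos.1 (hT ▸ k.succ_pos)
    have last_notMem : n + T.max' hT_ne ∉ T := fun hmem => by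
      have := T.le_max' _ hmem
      omega
    refine ⟨y, insert (n + T.max' hT_ne) T, by rw [Finset.card_insert_of_notMem last_notMem, hT],
      (Finset.forall_mem_insert _ _ _).2 ⟨?_, fun t ht => (hy t ht).1⟩⟩
    rw [Function.iterate_add_apply]
    exact (hy _ (T.max'_mem hT_ne)).2

/-- Among `s + 1` visits to `U`, two happen at times congruent modulo `s`. -/
theorem IsNonwandering.iterate (hf : IsNonwandering f) (hfc : Continuous f) {s : ℕ} (hs : 0 < s) :
    IsNonwandering f^[s] := by
  intro U hU hne
  obtain ⟨x, T, hT, hx⟩ := hf.exists_card_eq_forall_iterate_mem hfc s hU hne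
  obtain ⟨t, ht, t', ht', htt', hmod⟩ := Finset.exists_ne_map_eq_of_card_lt_of_maps_to
    (s := T) (t := Finset.range s) (f := (· % s)) (by rw [Finset.card_range]; omega)
    fun t _ => Finset.mem_coe.2 (Finset.mem_range.2 (t.mod_lt hs))
  wlog hlt : t < t' generalizing t t'
  · exact this t' ht' t ht htt'.symm hmod.symm (lt_of_le_of_ne (not_lt.1 hlt) htt'.symm)
  obtain ⟨n, hn⟩ := (Nat.modEq_iff_dvd' hlt.le).1 hmod
  refine ⟨f^[t] x, hx t ht, n, Nat.pos_of_ne_zero (by rintro rfl; omega), ?_⟩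
  rw [← Function.iterate_mul, ← hn, ← Function.iterate_add_apply, Nat.sub_add_cancel hlt.le]
  exact hx t' ht'

end Nonwandering

theorem InvariantFullMeasure.isNonwandering {f : Ann ≃ₜ Ann} {μ : Measure Ann}
    (hμ : InvariantFullMeasure f μ) : IsNonwandering f := by
  intro U hU hne
  obtain ⟨_, map_eq, pos⟩ := hμ
  have preserving : MeasurePreserving f μ μ := ⟨f.continuous.measurable, map_eq⟩
  obtain ⟨x, hx, n, hn, hfx⟩ := preserving.conservative.exists_mem_iterate_mem
    hU.measurableSet.nullMeasurableSet (pos U hU hne).ne'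
  exact ⟨x, hx, n, Nat.pos_of_ne_zero hn, hfx⟩

/-! ### Lifting to the universal covering -/

theorem pA_eq_pA_iff {z w : ℝ × ℝ} : pA z = pA w ↔ ∃ k : ℤ, w + deck k = z := by
  simp only [pA, Prod.ext_iff, Prod.fst_add, Prod.snd_add, deck_fst, deck_snd, add_zero,
    exists_and_right, eq_comm (a := z.2)]
  rw [← sub_eq_zero, ← AddCircle.coe_sub, AddCircle.coe_eq_zero_iff]
  simp only [zsmul_one, eq_sub_iff_add_eq']

@[simp]
theorem pA_add_deck (z : ℝ × ℝ) (k : ℤ) : pA (z + deck k) = pA z := pA_eq_pA_iff.2 ⟨k, rfl⟩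

theorem isInducing_deck : IsInducing deck :=
  (isEmbedding_prodMkLeft (0 : ℝ)).isInducing.comp Int.isClosedEmbedding_coe_real.isInducing

theorem isCoveringMap_pA : IsCoveringMap pA := by
  let p : ℝ × ℝ →+ Ann :=
    (QuotientAddGroup.mk' (AddSubgroup.zmultiples (1 : ℝ))).prodMap (AddMonoidHom.id ℝ)
  have ker_subset : (p.ker : Set (ℝ × ℝ)) ⊆ deck '' univ := fun z hz => by
    obtain ⟨k, hk⟩ := pA_eq_pA_iff.1 (show pA z = pA 0 from hz)
    exact ⟨k, mem_univ k, by rw [← hk, zero_add]⟩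
  have quotient : IsQuotientMap p :=
    (QuotientAddGroup.isOpenQuotientMap_mk.prodMap IsOpenQuotientMap.id).isQuotientMap
  exact (quotient.isAddQuotientCoveringMap_of_isDiscrete_ker_addMonoidHom
    ((IsDiscrete.univ.image isInducing_deck).mono ker_subset)).isCoveringMap

theorem exists_eq_add_deck_of_pA_eq {A : Type*} [TopologicalSpace A] [ConnectedSpace A]
    {u v : A → ℝ × ℝ} (hu : Continuous u) (hv : Continuous v) (h : ∀ x, pA (u x) = pA (v x)) :
    ∃ k : ℤ, ∀ x, u x = v x + deck k := by
  obtain ⟨x₀⟩ : Nonempty A := inferInstance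
  obtain ⟨k, hk⟩ := pA_eq_pA_iff.1 (h x₀)
  refine ⟨k, congrFun (isCoveringMap_pA.eq_of_comp_eq hu (hv.add continuous_const) ?_ x₀ hk.symm)⟩
  exact funext fun x => (h x).trans (pA_add_deck (v x) k).symm

theorem exists_lift_homotopy {F : ℝ × Ann → Ann} (hF : Continuous F) (F_zero : ∀ x, F (0, x) = x) :
    ∃ G : ℝ × (ℝ × ℝ) → ℝ × ℝ, Continuous G ∧ (∀ t z, pA (G (t, z)) = F (t, pA z)) ∧
      (∀ z, G (0, z) = z) ∧ ∀ t z k, G (t, z + deck k) = G (t, z) + deck k := by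
  have pA_cont := isCoveringMap_pA.continuous
  obtain ⟨G, ⟨G_origin, hG⟩, -⟩ := isCoveringMap_pA.existsUnique_continuousMap_lifts
    ⟨fun p : ℝ × (ℝ × ℝ) => F (p.1, pA p.2), by fun_prop⟩ (0, 0) 0 (F_zero (pA 0)).symm
  have G_lifts (t : ℝ) (z : ℝ × ℝ) : pA (G (t, z)) = F (t, pA z) := congrFun hG (t, z)
  have G_zero : (fun z => G (0, z)) = id := isCoveringMap_pA.eq_of_comp_eq (by fun_prop)
    continuous_id (funext fun z => (G_lifts 0 z).trans (F_zero _)) 0 G_origin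
  refine ⟨G, G.continuous, G_lifts, congrFun G_zero, fun t z k => ?_⟩
  refine congrFun (isCoveringMap_pA.eq_of_comp_eq (g₁ := fun p => G (p.1, p.2 + deck k))
    (g₂ := fun p => G p + deck k) (by fun_prop) (by fun_prop) (funext fun p => ?_) (0, 0) ?_) (t, z)
  · simp only [Function.comp_apply, pA_add_deck, G_lifts]
  · simp only [congrFun G_zero, id_eq]

section Lift

variable {f : Ann ≃ₜ Ann} {fc : ℝ × ℝ ≃ₜ ℝ × ℝ}

theorem IsotopicToId.isotopicThroughInjections (hf : IsotopicToId f) :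
    IsotopicThroughInjections f := by
  obtain ⟨H, hH, H_zero, H_one, H_homeo⟩ := hf
  refine ⟨fun p => H (projIcc (0 : ℝ) 1 zero_le_one p.1, p.2), ?_, fun t => ?_, fun z => ?_,
    fun z => ?_⟩
  · exact hH.comp_continuous (by fun_prop) fun p => ⟨Subtype.property _, mem_univ _⟩
  · obtain ⟨g, hg⟩ := H_homeo (projIcc (0 : ℝ) 1 zero_le_one t) (Subtype.property _)
    simpa only [hg] using g.injective
  · simp only [projIcc_left, H_zero]
  · simp only [projIcc_right, H_one]

/-- The lifted isotopy ends at `fc` only up to a deck translation, which is then interpolated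
linearly. -/
theorem IsotopicThroughInjections.lift (hf : IsotopicThroughInjections f) (hlift : IsLift f fc) :
    IsotopicThroughInjections fc ∧ IsDeckEquivariant fc := by
  obtain ⟨F, hF, F_inj, F_zero, F_one⟩ := hf
  obtain ⟨G, hG, G_lifts, G_zero, G_deck⟩ := exists_lift_homotopy hF F_zero
  obtain ⟨k, hk⟩ := exists_eq_add_deck_of_pA_eq (u := fc) (v := fun z => G (1, z)) fc.continuous
    (by fun_prop) fun z => by rw [hlift, G_lifts, F_one]
  refine ⟨⟨fun p => G p + p.1 • deck k, by fun_prop, fun t z w hzw => ?_, fun z => ?_,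
    fun z => ?_⟩, fun z j => ?_⟩
  · have G_eq : G (t, z) = G (t, w) := add_right_cancel hzw
    have F_eq : F (t, pA z) = F (t, pA w) := by rw [← G_lifts, ← G_lifts, G_eq]
    obtain ⟨j, rfl⟩ := pA_eq_pA_iff.1 (F_inj t F_eq)
    rw [G_deck, add_eq_left] at G_eq
    rw [G_eq, add_zero]
  · simp only [zero_smul, add_zero, G_zero]
  · simp only [one_smul, hk]
  · rw [hk, hk, G_deck, add_right_comm]

theorem IsNonwandering.isNonwanderingModDeck {F : Ann → Ann} {g : ℝ × ℝ → ℝ × ℝ}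
    (hF : IsNonwandering F) (hg : Function.Semiconj pA g F) : IsNonwanderingModDeck g := by
  intro V hV hne
  obtain ⟨_, ⟨y, hy, rfl⟩, n, hn, y', hy', hFy⟩ :=
    hF (pA '' V) (isCoveringMap_pA.isOpenMap V hV) (hne.image pA)
  rw [← (hg.iterate_right n).eq, pA_eq_pA_iff] at hFy
  obtain ⟨k, hk⟩ := hFy
  exact ⟨y, hy, n, hn, k, by rwa [hk]⟩

end Lift

/-! ### Drifts forced by the rotation set -/

section RotationSet

variable {fc : ℝ × ℝ ≃ₜ ℝ × ℝ} {ι : Type*} {l : Filter ι}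

theorem exists_mem_rotK_inter_of_mem_closure {x : EReal} {O : Set EReal}
    (hx : x ∈ interior (rot fc)) (hO : IsOpen O) (hxO : x ∈ closure O) :
    ∃ K, IsCompact K ∧ (rotK fc K ∩ O).Nonempty := by
  obtain ⟨y, hy, hyO⟩ := mem_closure_iff.1 hxO _ isOpen_interior hx
  obtain ⟨ρ, hρO, hρ⟩ := mem_closure_iff.1 (interior_subset hy) O hO hyO
  simp only [mem_iUnion] at hρ
  obtain ⟨K, hK, hρK⟩ := hρ
  exact ⟨K, hK, ρ, hρK, hρO⟩

theorem tendsto_sub_mul_atTop_of_tendsto_div {d : ι → ℝ} {n : ι → ℕ} {a : ℝ} {ρ : EReal}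
    (hn : Tendsto n l atTop) (hd : Tendsto (fun i => ((d i / n i : ℝ) : EReal)) l (𝓝 ρ))
    (ha : a < ρ) : Tendsto (fun i => d i - n i * a) l atTop := by
  obtain ⟨τ, haτ, hτρ⟩ := EReal.lt_iff_exists_real_btwn.1 ha
  have linear_growth : Tendsto (fun i => n i * (τ - a)) l atTop :=
    (tendsto_natCast_atTop_atTop.comp hn).atTop_mul_const (sub_pos.2 (EReal.coe_lt_coe_iff.1 haτ))
  refine tendsto_atTop_mono' l ?_ linear_growth
  filter_upwards [hd.eventually_const_lt hτρ, hn.eventually_gt_atTop 0] with i hi hpos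
  have hlt := (lt_div_iff₀ (Nat.cast_pos.2 hpos)).1 (EReal.coe_lt_coe_iff.1 hi)
  linarith

theorem tendsto_sub_mul_atBot_of_tendsto_div {d : ι → ℝ} {n : ι → ℕ} {a : ℝ} {ρ : EReal}
    (hn : Tendsto n l atTop) (hd : Tendsto (fun i => ((d i / n i : ℝ) : EReal)) l (𝓝 ρ))
    (ha : ρ < a) : Tendsto (fun i => d i - n i * a) l atBot := by
  have neg_tendsto : Tendsto (fun i => ((-d i / n i : ℝ) : EReal)) l (𝓝 (-ρ)) := by
    simpa only [neg_div, EReal.coe_neg] using hd.neg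
  have neg_lt : ((-a : ℝ) : EReal) < -ρ := by rwa [EReal.coe_neg, EReal.neg_lt_neg_iff]
  refine tendsto_neg_atTop_iff.1 ((tendsto_sub_mul_atTop_of_tendsto_div hn neg_tendsto
    neg_lt).congr fun i => ?_)
  ring

theorem exists_forall_mem_strip_of_isCompact {K : Set Ann} (hK : IsCompact K) :
    ∃ M, ∀ z, pA z ∈ K → z ∈ strip M := by
  obtain ⟨M, hM⟩ := hK.exists_bound_of_continuousOn continuous_snd.continuousOn
  exact ⟨M, fun z hz => mem_strip.2 (hM (pA z) hz)⟩

theorem IsDeckEquivariant.exists_iterate_displacement_le {h : ℝ × ℝ → ℝ × ℝ}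
    (hh : IsDeckEquivariant h) (hc : Continuous h) (M : ℝ) (s : ℕ) :
    ∃ C, ∀ j < s, ∀ z ∈ strip M, ‖h^[j] z - z‖ ≤ C := by
  choose c hc using fun j => (hh.iterate j).exists_displacement_le (hc.iterate j) M
  obtain ⟨C, hC⟩ := ((finite_Iio s).image c).bddAbove
  exact ⟨C, fun j hj z hz => (hc j z hz).trans (hC (mem_image_of_mem c hj))⟩

theorem IsDeckEquivariant.iterate_iterate_add_deck {h : ℝ × ℝ → ℝ × ℝ} (hh : IsDeckEquivariant h)
    (s : ℕ) (k : ℤ) (m : ℕ) (z : ℝ × ℝ) :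
    (fun w => h^[s] w + deck k)^[m] z = h^[s * m] z + deck (m * k) := by
  induction m with
  | zero => simp
  | succ m ih =>
    rw [Function.iterate_succ_apply', ih, hh.iterate s, ← Function.iterate_add_apply, add_assoc,
      ← map_add, Nat.mul_succ, add_comm s, Nat.cast_succ, add_one_mul]

theorem symm_iterate_mod_iterate {X : Type*} [TopologicalSpace X] (h : X ≃ₜ X) (N s : ℕ) (x : X) :
    h.symm^[N % s] (h^[N] x) = h^[s * (N / s)] x := by
  rw [← Function.LeftInverse.iterate h.symm_apply_apply (N % s) (h^[s * (N / s)] x),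
    ← Function.iterate_add_apply, Nat.mod_add_div]

theorem abs_mod_div_mul_le {s : ℕ} (hs : 0 < s) (N : ℕ) (x : ℝ) :
    |((N % s : ℕ) / s : ℝ) * x| ≤ |x| := by
  have div_le_one : ((N % s : ℕ) / s : ℝ) ≤ 1 :=
    div_le_one_of_le₀ (Nat.cast_le.2 (Nat.mod_lt N hs).le) s.cast_nonneg
  rw [abs_mul, abs_of_nonneg (by positivity)]
  exact mul_le_of_le_one_left (abs_nonneg x) div_le_one

/-- Division of `N` by `s` leaves a remainder whose orbit segment, run backwards from the endpoint
in the strip, has bounded displacement. -/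
theorem IsDeckEquivariant.exists_mem_stripDrifts_abs_sub_le (hfc : IsDeckEquivariant fc) {s : ℕ}
    (hs : 0 < s) (r : ℤ) (M : ℝ) :
    ∃ C, ∀ N ≥ s, ∀ z ∈ strip M, fc^[N] z ∈ strip M →
      ∃ d ∈ stripDrifts (fun w => fc^[s] w + deck (-r)) C,
        |d - ((fc^[N] z).1 - z.1 - N * (r / s))| ≤ C := by
  obtain ⟨C, hC⟩ := hfc.symm.exists_iterate_displacement_le fc.symm.continuous M s
  refine ⟨M + C + |(r : ℝ)|, fun N hN z hz hNz => ?_⟩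
  set m := N / s
  set j := N % s
  set w := fc^[N] z
  have g_iterate := hfc.iterate_iterate_add_deck s (-r) m z
  rw [← symm_iterate_mod_iterate fc N s z] at g_iterate
  have displacement := hC j (Nat.mod_lt N hs) w hNz
  have abs_fst_le := (norm_fst_le (fc.symm^[j] w - w)).trans displacement
  have abs_snd_le := (norm_snd_le (fc.symm^[j] w - w)).trans displacement
  rw [Prod.fst_sub, Real.norm_eq_abs] at abs_fst_le
  rw [Prod.snd_sub, Real.norm_eq_abs] at abs_snd_le
  have abs_snd_w := mem_strip.1 hNz
  have hM : 0 ≤ M := (abs_nonneg _).trans abs_snd_w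
  have hC₀ : 0 ≤ C := (abs_nonneg _).trans abs_snd_le
  refine ⟨_, ⟨z, m, Nat.div_pos hN hs, strip_mono ?_ hz, ?_, rfl⟩, ?_⟩
  · linarith [abs_nonneg (r : ℝ)]
  · rw [g_iterate, add_deck_mem_strip, mem_strip]
    have := abs_sub_abs_le_abs_sub (fc.symm^[j] w).2 w.2
    linarith [abs_nonneg (r : ℝ)]
  · have drift_eq : (fc.symm^[j] w + deck (m * -r)).1 - z.1 - (w.1 - z.1 - N * (r / s)) =
        ((fc.symm^[j] w).1 - w.1) + (j / s : ℝ) * r := by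
      rw [Prod.fst_add, deck_fst, ← Nat.mod_add_div N s]
      have : (s : ℝ) ≠ 0 := Nat.cast_ne_zero.2 hs.ne'
      push_cast
      field_simp
      ring
    rw [g_iterate, drift_eq]
    linarith [abs_add_le ((fc.symm^[j] w).1 - w.1) ((j / s : ℝ) * r),
      abs_mod_div_mul_le hs N (r : ℝ)]

theorem not_bddAbove_of_tendsto_atTop [l.NeBot] {S : Set ℝ} {u : ι → ℝ} {C : ℝ}
    (hu : Tendsto u l atTop) (hS : ∀ᶠ i in l, ∃ d ∈ S, |d - u i| ≤ C) : ¬BddAbove S := by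
  rintro ⟨B, hB⟩
  obtain ⟨i, ⟨d, hd, hle⟩, hgt⟩ := (hS.and (hu.eventually_gt_atTop (B + C))).exists
  linarith [hB hd, neg_le_of_abs_le hle]

theorem not_bddBelow_of_tendsto_atBot [l.NeBot] {S : Set ℝ} {u : ι → ℝ} {C : ℝ}
    (hu : Tendsto u l atBot) (hS : ∀ᶠ i in l, ∃ d ∈ S, |d - u i| ≤ C) : ¬BddBelow S := by
  rintro ⟨B, hB⟩
  obtain ⟨i, ⟨d, hd, hle⟩, hlt⟩ := (hS.and (hu.eventually_lt_atBot (B - C))).exists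
  linarith [hB hd, le_of_abs_le hle]

theorem IsDeckEquivariant.exists_stripDrifts_of_mem_rotK (hfc : IsDeckEquivariant fc) {s : ℕ}
    (hs : 0 < s) (r : ℤ) {K : Set Ann} (hK : IsCompact K) {ρ : EReal} (hρ : ρ ∈ rotK fc K) :
    ∃ (C : ℝ) (n : ℕ → ℕ) (D : ℕ → ℝ), Tendsto n atTop atTop ∧
      Tendsto (fun i => ((D i / n i : ℝ) : EReal)) atTop (𝓝 ρ) ∧
      ∀ᶠ i in atTop, ∃ d ∈ stripDrifts (fun w => fc^[s] w + deck (-r)) C,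
        |d - (D i - n i * (r / s))| ≤ C := by
  obtain ⟨z, n, hn, hzK, hlim⟩ := hρ
  obtain ⟨M, hM⟩ := exists_forall_mem_strip_of_isCompact hK
  obtain ⟨C, hC⟩ := hfc.exists_mem_stripDrifts_abs_sub_le hs r M
  refine ⟨C, n, _, hn, hlim, ?_⟩
  filter_upwards [hn.eventually_ge_atTop s] with i hi
  exact hC (n i) hi (z i) (hM _ (hzK i).1) (hM _ (hzK i).2)

theorem IsDeckEquivariant.exists_not_bddAbove_stripDrifts (hfc : IsDeckEquivariant fc) {s : ℕ}
    (hs : 0 < s) {r : ℤ} (hr : ((r / s : ℝ) : EReal) ∈ interior (rot fc)) :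
    ∃ C, ¬BddAbove (stripDrifts (fun w => fc^[s] w + deck (-r)) C) := by
  obtain ⟨K, hK, ρ, hρ, hlt⟩ := exists_mem_rotK_inter_of_mem_closure hr isOpen_Ioi
    (by rw [closure_Ioi' ⟨⊤, EReal.coe_lt_top _⟩]; exact self_mem_Ici)
  obtain ⟨C, n, D, hn, hD, hdrift⟩ := hfc.exists_stripDrifts_of_mem_rotK hs r hK hρ
  exact ⟨C, not_bddAbove_of_tendsto_atTop (tendsto_sub_mul_atTop_of_tendsto_div hn hD hlt) hdrift⟩

theorem IsDeckEquivariant.exists_not_bddBelow_stripDrifts (hfc : IsDeckEquivariant fc) {s : ℕ}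
    (hs : 0 < s) {r : ℤ} (hr : ((r / s : ℝ) : EReal) ∈ interior (rot fc)) :
    ∃ C, ¬BddBelow (stripDrifts (fun w => fc^[s] w + deck (-r)) C) := by
  obtain ⟨K, hK, ρ, hρ, hlt⟩ := exists_mem_rotK_inter_of_mem_closure hr isOpen_Iio
    (by rw [closure_Iio' ⟨⊥, EReal.bot_lt_coe _⟩]; exact self_mem_Iic)
  obtain ⟨C, n, D, hn, hD, hdrift⟩ := hfc.exists_stripDrifts_of_mem_rotK hs r hK hρ
  exact ⟨C, not_bddBelow_of_tendsto_atBot (tendsto_sub_mul_atBot_of_tendsto_div hn hD hlt) hdrift⟩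

end RotationSet

theorem rational_in_interior_realized_general {f : Ann ≃ₜ Ann} (hiso : IsotopicToId f)
    (hrec : IsNonwandering f) {fc : ℝ × ℝ ≃ₜ ℝ × ℝ} (hlift : IsLift f fc) {r s : ℤ} (hs : 1 ≤ s)
    (hr : ((r / s : ℝ) : EReal) ∈ interior (rot fc)) :
    ∃ z : ℝ × ℝ, fc^[s.toNat] z = z + ((r : ℝ), 0) := by
  lift s to ℕ using zero_le_one.trans hs
  have hs₀ : 0 < s := Nat.cast_pos.1 (zero_lt_one.trans_le hs)
  rw [Int.toNat_natCast]
  rw [Int.cast_natCast] at hr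
  by_contra! not_periodic
  obtain ⟨fc_isotopic, fc_deck⟩ := hiso.isotopicThroughInjections.lift hlift
  obtain ⟨h, h_isotopic, hh⟩ := fc_isotopic.exists_iterate s
  let g := h.trans (Homeomorph.addRight (deck (-r)))
  have g_eq : ⇑g = fun w => fc^[s] w + deck (-r) := by rw [← hh]; rfl
  have g_ne_self (z : ℝ × ℝ) : g z ≠ z := fun hz => not_periodic z <| show fc^[s] z = z + deck r by
    simpa only [g_eq, map_neg, ← sub_eq_add_neg, sub_eq_iff_eq_add] using hz
  have g_brouwer : IsBrouwerHomeo g := ⟨h_isotopic.trans (.addRight _), g_ne_self⟩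
  have g_deck : IsDeckEquivariant g := fun z k => by
    simp only [g_eq, fc_deck.iterate s z k, add_right_comm]
  have g_semiconj : Function.Semiconj pA g f^[s] := fun z => by
    rw [g_eq, pA_add_deck, (Function.Semiconj.iterate_right hlift s).eq]
  have g_rec := (hrec.iterate f.continuous hs₀).isNonwanderingModDeck g_semiconj
  obtain ⟨A, hA⟩ := fc_deck.exists_not_bddAbove_stripDrifts hs₀ hr
  obtain ⟨B, hB⟩ := fc_deck.exists_not_bddBelow_stripDrifts hs₀ hr
  rw [← g_eq] at hA hB
  have hM : 0 < max 1 (max A B) := lt_max_of_lt_left one_pos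
  rcases g_brouwer.bddAbove_or_bddBelow_stripDrifts g_deck g_rec hM with above | below
  · exact hA (above.mono (stripDrifts_mono (by simp)))
  · exact hB (below.mono (stripDrifts_mono (by simp)))

/-- **Theorem 2.7** (Franks, Le Calvez): rational numbers in the interior of the rotation
set are realized by periodic orbits. -/
theorem rational_in_interior_realized (f : Ann ≃ₜ Ann) (μ : Measure Ann)
    (hiso : IsotopicToId f) (hμ : InvariantFullMeasure f μ)
    (fc : (ℝ × ℝ) ≃ₜ (ℝ × ℝ)) (hlift : IsLift f fc) :
    ∀ r s : ℤ, 1 ≤ s → Int.gcd r s = 1 →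
      (((r : ℝ) / (s : ℝ) : ℝ) : EReal) ∈ interior (rot fc) →
      ∃ z : ℝ × ℝ, (⇑fc)^[s.toNat] z = z + ((r : ℝ), 0) :=
  fun _ _ hs _ hr => rational_in_interior_realized_general hiso hμ.isNonwandering hlift hs hr
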